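/- Let n ≥ 1, m ∈ ℝ and 1 ≥ ρ > δ ≥ 0. Assume σ ∈ S^m_{ρ,δ}(ℝⁿ) is real-valued with σ(x,ξ) ≥ 0 for all (x,ξ) ∈ ℝⁿ×ℝⁿ. Then for every η > 0 there exists a constant C_η > 0 such that for all f ∈ 𝒮(ℝⁿ): Re ∫_{ℝⁿ} Op^{KN}(σ)f(x) · conj(f(x)) dx ≥ −η ‖f‖²_{H^{(m+δ)/2}(ℝⁿ)} − C_η ‖f‖²_{H^{(m−(ρ−δ))/2}(ℝⁿ)}. (Euclidean analogue of the first part of Theorems 3.2 and 4.5: η-version of the Gårding inequality for non-negative symbols.) -/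

import Mathlib

open MeasureTheory Complex

noncomputable section

/-- `e^{2πit}`. -/
def expi (t : ℝ) : ℂ := Complex.exp (2 * (Real.pi : ℂ) * Complex.I * (t : ℂ))

/-- Dot product on `ℝⁿ`. -/
def dotp {n : ℕ} (x y : Fin n → ℝ) : ℝ := ∑ i, x i * y i

/-- Euclidean Fourier transform `𝓕f(ξ) = ∫ f(y) e^{-2πi y·ξ} dy`. -/
def FT {n : ℕ} (f : (Fin n → ℝ) → ℂ) (ξ : Fin n → ℝ) : ℂ :=
  ∫ y, f y * expi (-(dotp y ξ))

/-- Bargmann-type transform `B_a[f](x,ξ) = ∫ f(y) a(y-x) e^{-2πi y·ξ} dy`. -/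
def Barg {n : ℕ} (a f : (Fin n → ℝ) → ℂ) (x ξ : Fin n → ℝ) : ℂ :=
  ∫ y, f y * a (y - x) * expi (-(dotp y ξ))

/-- Wick quantization with window `a`. -/
def WickOp {n : ℕ} (a : (Fin n → ℝ) → ℂ) (σ : (Fin n → ℝ) → (Fin n → ℝ) → ℂ)
    (f : (Fin n → ℝ) → ℂ) (y : Fin n → ℝ) : ℂ :=
  ∫ p : (Fin n → ℝ) × (Fin n → ℝ),
    σ p.1 p.2 * Barg a f p.1 p.2 * (starRingEnd ℂ) (a (y - p.1)) * expi (dotp y p.2)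

/-- Kohn–Nirenberg quantization. -/
def OpKN {n : ℕ} (σ : (Fin n → ℝ) → (Fin n → ℝ) → ℂ) (f : (Fin n → ℝ) → ℂ)
    (x : Fin n → ℝ) : ℂ :=
  ∫ ξ, expi (dotp x ξ) * σ x ξ * FT f ξ

/-- Partial derivative in the `i`-th coordinate direction. -/
def pd {n : ℕ} (i : Fin n) (F : (Fin n → ℝ) → ℂ) : (Fin n → ℝ) → ℂ :=
  fun x => fderiv ℝ F x (Pi.single i 1)

/-- Multi-index derivative `∂^α`. -/
def md {n : ℕ} (α : Fin n → ℕ) (F : (Fin n → ℝ) → ℂ) : (Fin n → ℝ) → ℂ :=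
  (((List.finRange n).map fun i => (pd i)^[α i]).foldr (· ∘ ·) id) F

/-- Mixed derivative `∂_x^β ∂_ξ^α σ`. -/
def mixedD {n : ℕ} (β α : Fin n → ℕ) (σ : (Fin n → ℝ) → (Fin n → ℝ) → ℂ) :
    (Fin n → ℝ) → (Fin n → ℝ) → ℂ :=
  fun x ξ => md β (fun x' => md α (fun ξ' => σ x' ξ') ξ) x

/-- The weight `1 + |ξ|²` (Euclidean norm squared). -/
def wt {n : ℕ} (ξ : Fin n → ℝ) : ℝ := 1 + ∑ i, ξ i ^ 2

/-- Length `|α|` of a multi-index, as a real number. -/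
def mOrd {n : ℕ} (α : Fin n → ℕ) : ℝ := ∑ i, (α i : ℝ)

/-- The Hörmander class `S^m_{ρ,δ}(ℝⁿ)`. -/
def SymbolClass {n : ℕ} (m ρ δ : ℝ) (σ : (Fin n → ℝ) → (Fin n → ℝ) → ℂ) : Prop :=
  (ContDiff ℝ (⊤ : ℕ∞) fun p : (Fin n → ℝ) × (Fin n → ℝ) => σ p.1 p.2) ∧
  ∀ α β : Fin n → ℕ, ∃ C > 0, ∀ x ξ,
    ‖mixedD β α σ x ξ‖ ≤ C * wt ξ ^ ((m - ρ * mOrd α + δ * mOrd β) / 2)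

/-- The seminorm `‖σ‖_{S^m_{ρ,δ},α,β}`. -/
def hSem {n : ℕ} (m ρ δ : ℝ) (α β : Fin n → ℕ)
    (σ : (Fin n → ℝ) → (Fin n → ℝ) → ℂ) : ℝ :=
  ⨆ p : (Fin n → ℝ) × (Fin n → ℝ),
    wt p.2 ^ (-(m - ρ * mOrd α + δ * mOrd β) / 2) * ‖mixedD β α σ p.1 p.2‖

/-- Squared Sobolev norm `‖f‖²_{H^s}`. -/
def sobSq {n : ℕ} (s : ℝ) (f : (Fin n → ℝ) → ℂ) : ℝ :=
  ∫ ξ, wt ξ ^ s * ‖FT f ξ‖ ^ 2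

end

/-!
On the frequency shell `‖ξ‖ ≈ T`, rescale phase space by `T ^ κ` in frequency and `T ^ (-κ)` in
position, where `δ < κ < ρ`. In the new coordinates the symbol varies slowly: each derivative gains
a factor `T ^ (-ε)` with `ε > 0`. Cut the frequencies into unit cells by `ψ(D)`. On one cell the
symbol may be frozen in frequency, up to a relative error `T ^ (-ε)`; what remains is
`ψ(D)* p(x) ψ(D)` with `p ≥ 0`, a non-negative operator. Repeated integration by parts makes the
errors decay rapidly away from the cell, so they can be integrated over all positions of the cell.
Summing over dyadic shells bounds the form from below by `-C ‖f‖²` in the Sobolev space of order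
`(m - ε / 2) / 2 < m / 2`, and interpolating this norm between the two Sobolev norms in the theorem
makes the constant in front of the stronger one arbitrarily small.
-/

namespace Garding

open SchwartzMap FourierTransform Module
open scoped LineDeriv ContDiff ComplexConjugate

variable {V : Type*} [NormedAddCommGroup V] [InnerProductSpace ℝ V]

/-! ### The Kohn–Nirenberg form -/

section BoundedContinuous

variable {X Y : Type*} [TopologicalSpace X] [TopologicalSpace Y]

/-- Bounded continuous complex-valued functions, unbundled because the symbols below also carry
smoothness hypotheses. On such symbols every integral defining `knForm` converges absolutely. -/
structure IsBddCont (P : X → ℂ) : Prop where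
  continuous : Continuous P
  bounded : ∃ C, ∀ x, ‖P x‖ ≤ C

namespace IsBddCont

variable {P Q : X → ℂ}

lemma add (hP : IsBddCont P) (hQ : IsBddCont Q) : IsBddCont fun x => P x + Q x where
  continuous := hP.continuous.add hQ.continuous
  bounded := by
    obtain ⟨C, hC⟩ := hP.bounded
    obtain ⟨D, hD⟩ := hQ.bounded
    exact ⟨C + D, fun x => (norm_add_le _ _).trans (add_le_add (hC x) (hD x))⟩

lemma mul (hP : IsBddCont P) (hQ : IsBddCont Q) : IsBddCont fun x => P x * Q x where
  continuous := hP.continuous.mul hQ.continuous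
  bounded := by
    obtain ⟨C, hC⟩ := hP.bounded
    obtain ⟨D, hD⟩ := hQ.bounded
    refine ⟨C * D, fun x => ?_⟩
    rw [norm_mul]
    exact mul_le_mul (hC x) (hD x) (norm_nonneg _) ((norm_nonneg _).trans (hC x))

lemma comp (hP : IsBddCont P) {g : Y → X} (hg : Continuous g) : IsBddCont fun y => P (g y) where
  continuous := hP.continuous.comp hg
  bounded := hP.bounded.imp fun _ hC y => hC (g y)

lemma of_hasCompactSupport (hP : Continuous P) (hc : HasCompactSupport P) : IsBddCont P :=
  ⟨hP, hc.exists_bound_of_continuous hP⟩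

lemma const (c : ℂ) : IsBddCont fun _ : X => c :=
  ⟨continuous_const, ‖c‖, fun _ => le_rfl⟩

lemma mul_cutoff {P : X × Y → ℂ} (hP : IsBddCont P) {Φ : Y → ℂ} (hΦ : Continuous Φ)
    (hc : HasCompactSupport Φ) : IsBddCont fun p : X × Y => P p * Φ p.2 :=
  hP.mul ((of_hasCompactSupport hΦ hc).comp continuous_snd)

end IsBddCont

end BoundedContinuous

section KnForm

variable [FiniteDimensional ℝ V] [MeasurableSpace V] [BorelSpace V]

/-- The sesquilinear form `⟨Op(P) 𝓕⁻v, w⟩` of the Kohn–Nirenberg quantization of the symbol `P` on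
phase space `V × V`, with the first argument given on the Fourier side. -/
noncomputable def knForm (P : V × V → ℂ) (v w : V → ℂ) : ℂ :=
  ∫ x, 𝓕⁻ (fun θ => P (x, θ) * v θ) x * conj (w x)

lemma knForm_congr {P Q : V × V → ℂ} {v v' : V → ℂ} (w : V → ℂ)
    (h : ∀ x θ, P (x, θ) * v θ = Q (x, θ) * v' θ) : knForm P v w = knForm Q v' w := by
  simp only [knForm, h]

variable {P Q : V × V → ℂ}

lemma integrable_knForm (hP : IsBddCont P) (v w : 𝓢(V, ℂ)) :
    Integrable (fun X : V × V => Real.fourierChar (inner ℝ X.2 X.1) • (P X * v X.2) * conj (w X.1))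
      (volume.prod volume) := by
  obtain ⟨C, hC⟩ := hP.bounded
  have hwv : Integrable (fun X : V × V => ‖w X.1‖ * ‖v X.2‖) (volume.prod volume) :=
    w.integrable.norm.mul_prod v.integrable.norm
  refine (hwv.const_mul C).mono' ?_ (.of_forall fun X => ?_)
  · have := hP.continuous
    have := v.continuous
    have := w.continuous
    exact Continuous.aestronglyMeasurable (by fun_prop)
  · calc _ = ‖P X‖ * (‖w X.1‖ * ‖v X.2‖) := by
          rw [norm_mul, Circle.norm_smul, norm_mul, RCLike.norm_conj]; ring
      _ ≤ C * (‖w X.1‖ * ‖v X.2‖) := by gcongr; exact hC X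

lemma knForm_eq_integral_prod (hP : IsBddCont P) (v w : 𝓢(V, ℂ)) :
    knForm P v w = ∫ X : V × V,
      Real.fourierChar (inner ℝ X.2 X.1) • (P X * v X.2) * conj (w X.1) ∂(volume.prod volume) := by
  simp only [integral_prod _ (integrable_knForm hP v w), knForm, Real.fourierInv_eq,
    integral_mul_const]

lemma knForm_eq_integral_swap (hP : IsBddCont P) (v w : 𝓢(V, ℂ)) :
    knForm P v w = ∫ θ, v θ * ∫ x, Real.fourierChar (inner ℝ θ x) • P (x, θ) * conj (w x) := by
  rw [knForm_eq_integral_prod hP, integral_prod_symm _ (integrable_knForm hP v w)]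
  simp only [← integral_const_mul, Circle.smul_def, smul_eq_mul]
  congr! 4
  ring

lemma knForm_add (hP : IsBddCont P) (hQ : IsBddCont Q) (v w : 𝓢(V, ℂ)) :
    knForm (fun X => P X + Q X) v w = knForm P v w + knForm Q v w := by
  rw [knForm_eq_integral_prod hP, knForm_eq_integral_prod hQ, knForm_eq_integral_prod (hP.add hQ),
    ← integral_add (integrable_knForm hP v w) (integrable_knForm hQ v w)]
  simp only [add_mul, smul_add]

lemma fourierInv_mul_fourier (a g : 𝓢(V, ℂ)) (x : V) :
    𝓕⁻ (fun θ => a θ * 𝓕 g θ) x = ∫ y, 𝓕 a (y - x) * g y := by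
  have hconv := SchwartzMap.convolution_apply (ContinuousLinearMap.mul ℂ ℂ) (𝓕⁻ a) g x
  have hFinv (u : V) : (𝓕⁻ a : 𝓢(V, ℂ)) u = 𝓕 a (-u) := by rw [fourierInv_apply_eq]; rfl
  have hpair : (fun θ => a θ * 𝓕 g θ) =
      ⇑(𝓕 (SchwartzMap.convolution (ContinuousLinearMap.mul ℂ ℂ) (𝓕⁻ a) g) : 𝓢(V, ℂ)) := by
    ext θ
    simp [SchwartzMap.fourier_convolution]
  rw [hpair, ← fourierInv_coe, FourierTransform.fourierInv_fourier_eq, hconv, convolution_eq_swap]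
  simp [hFinv]

end KnForm

/-! ### Schur's test and kernel estimates -/

section Schur

variable [FiniteDimensional ℝ V] [MeasurableSpace V] [BorelSpace V] {k f : V → ℝ}

lemma integrable_sub_mul_snd (hk : Integrable k) (hf : Integrable f) :
    Integrable (fun p : V × V => k (p.2 - p.1) * f p.2) (volume.prod volume) := by
  refine (hf.convolution_integrand (ContinuousLinearMap.mul ℝ ℝ) hk.comp_neg).congr ?_
  exact .of_forall fun p => by simp [mul_comm]

lemma integral_sub_mul_snd (hk : Integrable k) (hf : Integrable f) :
    ∫ p : V × V, k (p.2 - p.1) * f p.2 ∂(volume.prod volume) = (∫ u, k u) * ∫ u, f u := by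
  rw [integral_prod_symm _ (integrable_sub_mul_snd hk hf)]
  simp_rw [integral_mul_const, integral_sub_left_eq_self k volume, integral_const_mul]

lemma integrable_sub_mul_fst (hk : Integrable k) (hf : Integrable f) :
    Integrable (fun p : V × V => k (p.2 - p.1) * f p.1) (volume.prod volume) := by
  refine (hf.convolution_integrand (ContinuousLinearMap.mul ℝ ℝ) hk).swap.congr ?_
  exact .of_forall fun p => by simp [mul_comm]

lemma integral_sub_mul_fst (hk : Integrable k) (hf : Integrable f) :
    ∫ p : V × V, k (p.2 - p.1) * f p.1 ∂(volume.prod volume) = (∫ u, k u) * ∫ u, f u := by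
  rw [integral_prod _ (integrable_sub_mul_fst hk hf)]
  simp_rw [integral_mul_const, integral_sub_right_eq_self k, integral_const_mul]

lemma schur_test (hk0 : ∀ u, 0 ≤ k u) (hk : Integrable k) {g w : V → ℂ}
    (hg : Integrable fun x => ‖g x‖ ^ 2) (hw : Integrable fun x => ‖w x‖ ^ 2)
    {F : V → V → ℂ} (hF : ∀ x y, ‖F x y‖ ≤ k (y - x) * ‖g y‖ * ‖w x‖) :
    ‖∫ x, ∫ y, F x y‖ ≤ (∫ u, k u) * ((∫ x, ‖g x‖ ^ 2) + ∫ x, ‖w x‖ ^ 2) := by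
  have h_int := (integrable_sub_mul_snd hk hg).add (integrable_sub_mul_fst hk hw)
  have hsum := integral_add (integrable_sub_mul_snd hk hg) (integrable_sub_mul_fst hk hw)
  rw [mul_add, ← integral_sub_mul_snd hk hg, ← integral_sub_mul_fst hk hw, ← hsum]
  refine le_of_le_of_eq ?_ (integral_prod _ h_int).symm
  refine norm_integral_le_of_norm_le h_int.integral_prod_left ?_
  filter_upwards [h_int.prod_right_ae] with x hx
  refine norm_integral_le_of_norm_le hx (.of_forall fun y => ?_)
  have hamgm : ‖g y‖ * ‖w x‖ ≤ ‖g y‖ ^ 2 + ‖w x‖ ^ 2 := by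
    nlinarith [two_mul_le_add_sq ‖g y‖ ‖w x‖, sq_nonneg ‖g y‖, sq_nonneg ‖w x‖]
  calc ‖F x y‖ ≤ k (y - x) * (‖g y‖ * ‖w x‖) := by rw [← mul_assoc]; exact hF x y
    _ ≤ k (y - x) * (‖g y‖ ^ 2 + ‖w x‖ ^ 2) := mul_le_mul_of_nonneg_left hamgm (hk0 _)
    _ = _ := mul_add _ _ _

lemma integrable_norm_sq (w : 𝓢(V, ℂ)) : Integrable fun x => ‖w x‖ ^ 2 := by
  simpa using (w.memLp 2 volume).integrable_norm_pow (by norm_num)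

end Schur

section Kernel

variable {Φ : V → ℂ}

lemma iteratedFDeriv_eq_zero_of_notMem_tsupport {E F : Type*} [NormedAddCommGroup E]
    [NormedSpace ℝ E] [NormedAddCommGroup F] [NormedSpace ℝ F] {f : E → F} {x : E}
    (hx : x ∉ tsupport f) (k : ℕ) : iteratedFDeriv ℝ k f x = 0 :=
  Function.notMem_support.1 fun h => hx (support_iteratedFDeriv_subset (𝕜 := ℝ) k h)

lemma exists_norm_iteratedFDeriv_mul_cutoff_le (hΦ : ContDiff ℝ ∞ Φ) (hc : HasCompactSupport Φ)
    (A : ℕ → ℝ) (N : ℕ) :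
    ∃ B : ℝ, 0 ≤ B ∧ ∀ (q : V → ℂ) (μ : ℝ), 0 ≤ μ → ContDiff ℝ ∞ q →
      (∀ θ ∈ tsupport Φ, ∀ k, ‖iteratedFDeriv ℝ k q θ‖ ≤ μ * A k) →
      ∀ k ≤ N, ∀ θ, ‖iteratedFDeriv ℝ k (fun θ => q θ * Φ θ) θ‖ ≤ μ * B := by
  have hΦ_bdd (j : ℕ) : ∃ S : ℝ, ∀ θ, ‖iteratedFDeriv ℝ j Φ θ‖ ≤ S :=
    (hc.iteratedFDeriv (𝕜 := ℝ) j).exists_bound_of_continuous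
      (hΦ.continuous_iteratedFDeriv (by exact_mod_cast le_top))
  choose S hS using hΦ_bdd
  have hS0 (j : ℕ) : 0 ≤ S j := (norm_nonneg _).trans (hS j 0)
  let leibniz (k : ℕ) : ℝ := ∑ i ∈ Finset.range (k + 1), (k.choose i : ℝ) * |A i| * S (k - i)
  have hleibniz (k : ℕ) : 0 ≤ leibniz k :=
    Finset.sum_nonneg fun i _ => mul_nonneg (by positivity) (hS0 _)
  refine ⟨∑ k ∈ Finset.range (N + 1), leibniz k, Finset.sum_nonneg fun k _ => hleibniz k, ?_⟩
  intro q μ hμ hq hqA k hk θ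
  have hsingle : leibniz k ≤ ∑ k ∈ Finset.range (N + 1), leibniz k :=
    Finset.single_le_sum (fun k _ => hleibniz k) (Finset.mem_range.2 (by omega))
  by_cases hθ : θ ∈ tsupport Φ
  · calc _ ≤ ∑ i ∈ Finset.range (k + 1), (k.choose i : ℝ) * ‖iteratedFDeriv ℝ i q θ‖ *
            ‖iteratedFDeriv ℝ (k - i) Φ θ‖ :=
          norm_iteratedFDeriv_mul_le hq hΦ θ (by exact_mod_cast le_top)
      _ ≤ ∑ i ∈ Finset.range (k + 1), (k.choose i : ℝ) * (μ * |A i|) * S (k - i) := by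
          gcongr with i
          · exact (hqA θ hθ i).trans (by gcongr; exact le_abs_self _)
          · exact hS _ θ
      _ = μ * leibniz k := by
          rw [Finset.mul_sum]
          exact Finset.sum_congr rfl fun i _ => by ring
      _ ≤ _ := by gcongr
  · have hθ' : θ ∉ tsupport fun θ => q θ * Φ θ := fun h =>
      hθ (closure_mono (Function.support_mul_subset_right q Φ) h)
    rw [iteratedFDeriv_eq_zero_of_notMem_tsupport hθ', norm_zero]
    exact mul_nonneg hμ ((hleibniz k).trans hsingle)

variable [FiniteDimensional ℝ V] [MeasurableSpace V] [BorelSpace V]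

lemma integral_norm_iteratedFDeriv_le (a : 𝓢(V, ℂ)) {K : Set V} (hK : IsCompact K)
    (hsupp : tsupport a ⊆ K) {B : ℝ} {k : ℕ} (hB : ∀ θ, ‖iteratedFDeriv ℝ k a θ‖ ≤ B) :
    ∫ θ, ‖iteratedFDeriv ℝ k a θ‖ ≤ volume.real K * B := by
  have hzero (θ : V) (hθ : θ ∉ K) : ‖iteratedFDeriv ℝ k a θ‖ = 0 := by
    rw [iteratedFDeriv_eq_zero_of_notMem_tsupport (fun h => hθ (hsupp h)), norm_zero]
  rw [← setIntegral_eq_integral_of_forall_compl_eq_zero hzero]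
  have hnorm : ‖∫ θ in K, ‖iteratedFDeriv ℝ k a θ‖‖ ≤ B * volume.real K :=
    norm_setIntegral_le_of_norm_le_const hK.measure_lt_top fun θ _ => by simpa using hB θ
  exact (Real.le_norm_self _).trans (hnorm.trans_eq (mul_comm _ _))

lemma pow_mul_norm_fourier_le (a : 𝓢(V, ℂ)) (N : ℕ) {K : Set V} (hK : IsCompact K)
    (hsupp : tsupport a ⊆ K) {B : ℝ} (hB : ∀ k ≤ N, ∀ θ, ‖iteratedFDeriv ℝ k a θ‖ ≤ B) (u : V) :
    ‖u‖ ^ N * ‖𝓕 a u‖ ≤ 2 ^ N * ((N + 1) * (volume.real K * B)) := by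
  have hdecay := Real.pow_mul_norm_iteratedFDeriv_fourier_le (K := ⊤) (N := ⊤) (f := a) (k := 0)
    (n := N) (a.smooth _) (fun k n _ _ => a.integrable_pow_mul_iteratedFDeriv volume k n)
    le_top le_top u
  simp only [norm_iteratedFDeriv_zero, pow_zero, one_mul, zero_add, Finset.sum_product,
    Finset.sum_range_one, CharP.cast_eq_zero, mul_zero] at hdecay
  rw [fourier_coe]
  refine hdecay.trans (mul_le_mul_of_nonneg_left ?_ (by positivity))
  refine (Finset.sum_le_card_nsmul _ _ (volume.real K * B) fun k hk => ?_).trans_eq (by simp)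
  exact integral_norm_iteratedFDeriv_le a hK hsupp (hB k (Finset.mem_range_succ_iff.1 hk))

lemma exists_norm_fourier_le (K : Set V) (hK : IsCompact K) :
    ∃ D : ℝ, 0 ≤ D ∧ ∀ (a : 𝓢(V, ℂ)) (B : ℝ), tsupport a ⊆ K →
      (∀ k ≤ finrank ℝ V + 1, ∀ θ, ‖iteratedFDeriv ℝ k a θ‖ ≤ B) →
      ∀ u, ‖𝓕 a u‖ ≤ B * D * (1 + ‖u‖) ^ (-((finrank ℝ V + 1 : ℕ) : ℝ)) := by
  set d := finrank ℝ V + 1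
  refine ⟨2 ^ d * (volume.real K + 2 ^ d * ((d + 1) * volume.real K)), by positivity, ?_⟩
  intro a B hsupp hB u
  have hzero := pow_mul_norm_fourier_le a 0 hK hsupp (fun k hk => hB k (by omega)) u
  have htop := pow_mul_norm_fourier_le a d hK hsupp hB u
  have hinterp := pow_mul_le_of_le_of_pow_mul_le (k := 0) (norm_nonneg u) (norm_nonneg (𝓕 a u))
    (by simpa using hzero) (by simpa using htop)
  rw [pow_zero, one_mul] at hinterp
  exact hinterp.trans_eq (by ring)

lemma exists_norm_knForm_mul_cutoff_le (hΦ : ContDiff ℝ ∞ Φ) (hc : HasCompactSupport Φ)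
    (A : ℕ → ℝ) :
    ∃ C : ℝ, 0 ≤ C ∧ ∀ (P : V × V → ℂ) (μ : ℝ), 0 ≤ μ → (∀ x, ContDiff ℝ ∞ fun θ => P (x, θ)) →
      (∀ x, ∀ θ ∈ tsupport Φ, ∀ k, ‖iteratedFDeriv ℝ k (fun θ => P (x, θ)) θ‖ ≤ μ * A k) →
      ∀ g w : 𝓢(V, ℂ), ‖knForm (fun X => P X * Φ X.2) ⇑(𝓕 g : 𝓢(V, ℂ)) w‖
        ≤ C * μ * ((∫ x, ‖g x‖ ^ 2) + ∫ x, ‖w x‖ ^ 2) := by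
  set d := finrank ℝ V + 1
  obtain ⟨B, hB0, hB⟩ := exists_norm_iteratedFDeriv_mul_cutoff_le hΦ hc A d
  obtain ⟨D, hD0, hD⟩ := exists_norm_fourier_le (tsupport Φ) hc
  have hker : Integrable fun u : V => (1 + ‖u‖) ^ (-(d : ℝ)) :=
    integrable_one_add_norm (by exact_mod_cast Nat.lt_succ_self _)
  refine ⟨B * D * ∫ u : V, (1 + ‖u‖) ^ (-(d : ℝ)),
    mul_nonneg (by positivity) (integral_nonneg fun u => by positivity), ?_⟩
  intro P μ hμ hP hPA g w
  let a (x : V) : 𝓢(V, ℂ) :=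
    (hc.mul_left : HasCompactSupport fun θ => P (x, θ) * Φ θ).toSchwartzMap ((hP x).mul hΦ)
  have hform : knForm (fun X => P X * Φ X.2) ⇑(𝓕 g : 𝓢(V, ℂ)) w
      = ∫ x, ∫ y, 𝓕 (a x) (y - x) * g y * conj (w x) := by
    unfold knForm
    congr 1
    ext x
    rw [integral_mul_const, ← fourierInv_mul_fourier]
    rfl
  have hkernel (x u : V) : ‖𝓕 (a x) u‖ ≤ μ * B * D * (1 + ‖u‖) ^ (-(d : ℝ)) :=
    hD (a x) (μ * B) (closure_mono (Function.support_mul_subset_right _ Φ))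
      (hB _ μ hμ (hP x) (hPA x)) u
  have hschur := schur_test (k := fun u => μ * B * D * (1 + ‖u‖) ^ (-(d : ℝ)))
    (fun u => by positivity) (hker.const_mul _) (integrable_norm_sq g) (integrable_norm_sq w)
    (F := fun x y => 𝓕 (a x) (y - x) * g y * conj (w x)) fun x y => by
      simp only [norm_mul, RCLike.norm_conj]
      gcongr
      exact hkernel x _
  rw [hform]
  refine hschur.trans_eq ?_
  rw [integral_const_mul]
  ring

end Kernel

/-! ### Slowly varying symbols -/

section SlowSymbol

/-- Smooth bounded symbols on phase space all of whose derivatives of positive order are small: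
the `k`-th one is at most `μ * A k`. The gain `μ` measures how slowly the symbol varies, while the
profile `A` is fixed. -/
structure IsSlowSymbol (A : ℕ → ℝ) (μ : ℝ) (P : V × V → ℂ) : Prop where
  contDiff : ContDiff ℝ ∞ P
  bounded : ∃ C, ∀ X, ‖P X‖ ≤ C
  norm_iteratedFDeriv_le : ∀ k, 1 ≤ k → ∀ X, ‖iteratedFDeriv ℝ k P X‖ ≤ μ * A k

/-- The directional derivative of a symbol in the space direction `d`. -/
noncomputable def fstDeriv (d : V) (P : V × V → ℂ) (X : V × V) : ℂ := fderiv ℝ P X (d, 0)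

variable {P : V × V → ℂ} {A : ℕ → ℝ} {μ : ℝ}

lemma contDiff_slice (hP : ContDiff ℝ ∞ P) (x : V) : ContDiff ℝ ∞ fun θ => P (x, θ) :=
  hP.comp (contDiff_const.prodMk contDiff_id)

lemma norm_iteratedFDeriv_slice_le (hP : ContDiff ℝ ∞ P) (x θ : V) (k : ℕ) :
    ‖iteratedFDeriv ℝ k (fun θ => P (x, θ)) θ‖ ≤ ‖iteratedFDeriv ℝ k P (x, θ)‖ := by
  have hcomp : (fun θ => P (x, θ)) =
      (fun X => P ((x, 0) + X)) ∘ ContinuousLinearMap.inr ℝ V V := by ext θ; simp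
  have htranslate : ContDiff ℝ ∞ fun X => P ((x, 0) + X) :=
    hP.comp (contDiff_const.add contDiff_id)
  rw [hcomp, ContinuousLinearMap.iteratedFDeriv_comp_right _ htranslate _
    (by exact_mod_cast le_top), iteratedFDeriv_comp_add_left]
  refine (ContinuousMultilinearMap.norm_compContinuousLinearMap_le _ _).trans ?_
  simp only [ContinuousLinearMap.inr_apply, Prod.mk_add_mk, add_zero, zero_add]
  exact mul_le_of_le_one_right (norm_nonneg _) (Finset.prod_le_one (fun _ _ => norm_nonneg _)
    fun _ _ => ContinuousLinearMap.norm_inr_le_one _ _ _)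

lemma contDiff_fstDeriv (hP : ContDiff ℝ ∞ P) (d : V) : ContDiff ℝ ∞ (fstDeriv d P) :=
  (hP.fderiv_right (m := ∞) (by simp)).clm_apply contDiff_const

namespace IsSlowSymbol

lemma isBddCont (h : IsSlowSymbol A μ P) : IsBddCont P := ⟨h.contDiff.continuous, h.bounded⟩

lemma norm_iteratedFDeriv_fstDeriv_le (h : IsSlowSymbol A μ P) (d : V) (k : ℕ) (X : V × V) :
    ‖iteratedFDeriv ℝ k (fstDeriv d P) X‖ ≤ μ * (‖d‖ * A (k + 1)) :=
  calc _ ≤ ‖((d, 0) : V × V)‖ * ‖iteratedFDeriv ℝ k (fderiv ℝ P) X‖ :=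
        norm_iteratedFDeriv_clm_apply_const (h.contDiff.fderiv_right (m := ∞) (by simp)).contDiffAt
          (by exact_mod_cast le_top)
    _ = ‖d‖ * ‖iteratedFDeriv ℝ (k + 1) P X‖ := by
        rw [norm_iteratedFDeriv_fderiv]; simp [Prod.norm_def]
    _ ≤ ‖d‖ * (μ * A (k + 1)) := by
        gcongr; exact h.norm_iteratedFDeriv_le (k + 1) (by omega) X
    _ = _ := by ring

lemma fstDeriv (h : IsSlowSymbol A μ P) (d : V) :
    IsSlowSymbol (fun k => ‖d‖ * A (k + 1)) μ (fstDeriv d P) where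
  contDiff := contDiff_fstDeriv h.contDiff d
  bounded := ⟨_, fun X => by simpa using h.norm_iteratedFDeriv_fstDeriv_le d 0 X⟩
  norm_iteratedFDeriv_le k _ X := h.norm_iteratedFDeriv_fstDeriv_le d k X

lemma norm_sub_le (h : IsSlowSymbol A μ P) (X Y : V × V) :
    ‖P X - P Y‖ ≤ μ * A 1 * ‖X - Y‖ := by
  refine convex_univ.norm_image_sub_le_of_norm_fderiv_le (𝕜 := ℝ)
    (fun Z _ => h.contDiff.differentiable (by simp) Z) (fun Z _ => ?_)
    (Set.mem_univ _) (Set.mem_univ _)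
  have hone := h.norm_iteratedFDeriv_le 1 le_rfl Z
  rwa [← norm_iteratedFDeriv_fderiv (n := 0), norm_iteratedFDeriv_zero] at hone

lemma norm_iteratedFDeriv_slice_sub_le (h : IsSlowSymbol A μ P) (x : V) {θ : V} {R : ℝ}
    (hθ : ‖θ‖ ≤ R) (k : ℕ) :
    ‖iteratedFDeriv ℝ k (fun θ => P (x, θ) - P (x, 0)) θ‖ ≤
      μ * (if k = 0 then A 1 * R else A k) := by
  obtain - | k := k
  · have hA : 0 ≤ μ * A 1 := (norm_nonneg _).trans (h.norm_iteratedFDeriv_le 1 le_rfl 0)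
    calc ‖iteratedFDeriv ℝ 0 (fun θ => P (x, θ) - P (x, 0)) θ‖ = ‖P (x, θ) - P (x, 0)‖ :=
          norm_iteratedFDeriv_zero
      _ ≤ μ * A 1 * ‖((x, θ) : V × V) - (x, 0)‖ := h.norm_sub_le _ _
      _ = μ * A 1 * ‖θ‖ := by simp [Prod.norm_def]
      _ ≤ μ * A 1 * R := by gcongr
      _ = μ * (if 0 = 0 then A 1 * R else A 0) := by simp [mul_assoc]
  · have hfderiv : fderiv ℝ (fun θ => P (x, θ) - P (x, 0)) = fderiv ℝ fun θ => P (x, θ) := by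
      ext1 θ; rw [fderiv_sub_const]
    rw [← norm_iteratedFDeriv_fderiv, hfderiv, norm_iteratedFDeriv_fderiv, if_neg k.succ_ne_zero]
    exact (norm_iteratedFDeriv_slice_le h.contDiff x θ _).trans
      (h.norm_iteratedFDeriv_le _ (by omega) _)

end IsSlowSymbol

end SlowSymbol

/-! ### Integration by parts -/

section LineSymbol

/-- The factor `1 + 2πi⟨d, θ⟩` produced by `1 + ∂_d` on `e^{2πi⟨x, θ⟩}`; its complex conjugate is
the Fourier multiplier of `1 - ∂_d`. -/
noncomputable def lineSymbol (d θ : V) : ℂ := 1 + 2 * Real.pi * Complex.I * (inner ℝ d θ : ℝ)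

/-- The product of the factors `lineSymbol d` over the directions `d` of a list. -/
noncomputable def listSymbol (L : List V) (θ : V) : ℂ := (L.map (lineSymbol · θ)).prod

@[simp] lemma listSymbol_nil (θ : V) : listSymbol [] θ = 1 := rfl

@[simp] lemma listSymbol_cons (d : V) (L : List V) (θ : V) :
    listSymbol (d :: L) θ = lineSymbol d θ * listSymbol L θ := by
  simp [listSymbol]

lemma contDiff_lineSymbol (d : V) : ContDiff ℝ ∞ (lineSymbol d) :=
  contDiff_const.add (contDiff_const.mul
    (Complex.ofRealCLM.contDiff.comp (contDiff_const.inner ℝ contDiff_id)))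

lemma contDiff_listSymbol (L : List V) : ContDiff ℝ ∞ (listSymbol L) := by
  induction L with
  | nil => exact contDiff_const
  | cons d L ih => simpa only [funext (listSymbol_cons d L)] using (contDiff_lineSymbol d).mul ih

lemma normSq_lineSymbol (d θ : V) :
    Complex.normSq (lineSymbol d θ) = 1 + (2 * Real.pi * inner ℝ d θ) ^ 2 := by
  simp [lineSymbol, Complex.normSq_apply]
  ring

lemma listSymbol_ne_zero (L : List V) (θ : V) : listSymbol L θ ≠ 0 := by
  refine List.prod_ne_zero fun h => ?_
  obtain ⟨d, -, hd⟩ := List.mem_map.1 h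
  have hnormSq := normSq_lineSymbol d θ
  rw [hd, map_zero] at hnormSq
  nlinarith [sq_nonneg (2 * Real.pi * inner ℝ d θ)]

lemma hasTemperateGrowth_inv_conj_lineSymbol (d : V) :
    (fun θ => (conj (lineSymbol d θ))⁻¹).HasTemperateGrowth := by
  have hinner : (fun θ : V => inner ℝ d θ).HasTemperateGrowth :=
    Function.hasTemperateGrowth_inner_right d
  have hscaled : (fun θ : V => 2 * Real.pi * inner ℝ d θ).HasTemperateGrowth :=
    (Function.HasTemperateGrowth.const _).mul hinner
  have hline : (lineSymbol d).HasTemperateGrowth :=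
    (Function.HasTemperateGrowth.const _).add ((Function.HasTemperateGrowth.const _).mul
      (Function.Complex.hasTemperateGrowth_ofReal.comp hinner))
  have hinv := Function.Complex.hasTemperateGrowth_ofReal.comp
    ((Function.hasTemperateGrowth_one_add_norm_sq_rpow ℝ (-1)).comp hscaled)
  have heq : (fun θ => (conj (lineSymbol d θ))⁻¹) = lineSymbol d * (Complex.ofReal ∘
      (fun t : ℝ => (1 + ‖t‖ ^ 2) ^ (-1 : ℝ)) ∘ fun θ => 2 * Real.pi * inner ℝ d θ) := by
    ext θ
    rw [Complex.inv_def, Complex.normSq_conj, normSq_lineSymbol, Complex.conj_conj]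
    simp [Real.rpow_neg_one]
  exact heq ▸ hline.mul hinv

lemma hasTemperateGrowth_inv_conj_listSymbol (L : List V) :
    (fun θ => (conj (listSymbol L θ))⁻¹).HasTemperateGrowth := by
  induction L with
  | nil => simp
  | cons d L ih =>
    have heq : (fun θ => (conj (listSymbol (d :: L) θ))⁻¹) =
        (fun θ => (conj (lineSymbol d θ))⁻¹) * fun θ => (conj (listSymbol L θ))⁻¹ := by
      ext θ
      simp [mul_comm]
    exact heq ▸ (hasTemperateGrowth_inv_conj_lineSymbol d).mul ih

/-- The differential operator `∏ (1 - ∂_d)`, the product running over the directions of a list. -/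
noncomputable def oneSubLineDerivs (L : List V) (w : 𝓢(V, ℂ)) : 𝓢(V, ℂ) :=
  L.foldr (fun d u => u - ∂_{d} u) w

variable [FiniteDimensional ℝ V] [MeasurableSpace V] [BorelSpace V]

lemma fourier_oneSubLineDerivs (L : List V) (w : 𝓢(V, ℂ)) (θ : V) :
    𝓕 (oneSubLineDerivs L w) θ = conj (listSymbol L θ) * 𝓕 w θ := by
  induction L with
  | nil => simp [oneSubLineDerivs]
  | cons d L ih =>
    have hcons : 𝓕 (oneSubLineDerivs (d :: L) w) =
        𝓕 (oneSubLineDerivs L w) - 𝓕 (∂_{d} (oneSubLineDerivs L w)) :=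
      map_sub (fourierCLM ℂ 𝓢(V, ℂ)) _ _
    rw [hcons, sub_apply, SchwartzMap.fourier_lineDerivOp_eq, smul_apply,
      SchwartzMap.smulLeftCLM_apply_apply (by fun_prop), ih]
    simp [lineSymbol, real_inner_comm, Complex.conj_ofNat]
    ring

lemma exists_oneSubLineDerivs_eq (L : List V) (u : 𝓢(V, ℂ)) :
    ∃ w : 𝓢(V, ℂ), oneSubLineDerivs L w = u := by
  refine ⟨fourierMultiplierCLM ℂ (fun θ => (conj (listSymbol L θ))⁻¹) u,
    (fourierEquiv ℂ 𝓢(V, ℂ)).injective ?_⟩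
  ext θ
  rw [fourierEquiv_apply, fourierEquiv_apply, fourier_oneSubLineDerivs,
    fourierMultiplierCLM_apply, fourier_fourierInv_eq,
    smulLeftCLM_apply_apply (hasTemperateGrowth_inv_conj_listSymbol L), smul_eq_mul,
    mul_inv_cancel_left₀ ((map_ne_zero _).2 (listSymbol_ne_zero L θ))]

lemma integral_norm_sq_fourier_oneSubLineDerivs_div (L : List V) (w : 𝓢(V, ℂ)) :
    ∫ θ, ‖𝓕 (oneSubLineDerivs L w) θ‖ ^ 2 / ‖listSymbol L θ‖ ^ 2 = ∫ x, ‖w x‖ ^ 2 := by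
  rw [← SchwartzMap.integral_norm_sq_fourier w]
  congr 1
  ext θ
  have hne : ‖listSymbol L θ‖ ≠ 0 := norm_ne_zero_iff.2 (listSymbol_ne_zero L θ)
  rw [fourier_oneSubLineDerivs, norm_mul, RCLike.norm_conj]
  field_simp

end LineSymbol

section IntegrationByParts

lemma fderiv_conj_apply (w : 𝓢(V, ℂ)) (d x : V) :
    fderiv ℝ (fun x => conj (w x)) x d = conj ((∂_{d} w) x) := by
  have hconj : HasFDerivAt (fun x => conj (w x))
      ((Complex.conjCLE : ℂ →L[ℝ] ℂ).comp (fderiv ℝ w x)) x :=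
    (Complex.conjCLE : ℂ →L[ℝ] ℂ).hasFDerivAt.comp x w.differentiableAt.hasFDerivAt
  rw [hconj.fderiv, SchwartzMap.lineDerivOp_apply_eq_fderiv]
  rfl

lemma hasFDerivAt_fourierChar_smul_slice {P : V × V → ℂ} (hP : ContDiff ℝ ∞ P) (θ x : V) :
    HasFDerivAt (fun x => Real.fourierChar (inner ℝ θ x) • P (x, θ))
      ((Real.fourierChar (inner ℝ θ x) : ℂ) •
          (fderiv ℝ P (x, θ)).comp (ContinuousLinearMap.inl ℝ V V) +
        P (x, θ) • ((innerSL ℝ θ).smulRight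
          (2 * Real.pi * Complex.I * Real.fourierChar (inner ℝ θ x)))) x := by
  have hchar : HasFDerivAt (fun x => (Real.fourierChar (inner ℝ θ x) : ℂ))
      ((innerSL ℝ θ).smulRight (2 * Real.pi * Complex.I * Real.fourierChar (inner ℝ θ x))) x :=
    (Real.hasDerivAt_fourierChar (inner ℝ θ x)).hasFDerivAt.comp x (innerSL ℝ θ).hasFDerivAt
  have hslice : HasFDerivAt (fun x => P (x, θ))
      ((fderiv ℝ P (x, θ)).comp (ContinuousLinearMap.inl ℝ V V)) x :=
    (hP.differentiable (by simp) (x, θ)).hasFDerivAt.comp x (hasFDerivAt_prodMk_left x θ)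
  exact hchar.mul hslice

lemma add_fderiv_fourierChar_smul_slice {P : V × V → ℂ} (hP : ContDiff ℝ ∞ P) (d θ x : V) :
    Real.fourierChar (inner ℝ θ x) • P (x, θ) +
        fderiv ℝ (fun x => Real.fourierChar (inner ℝ θ x) • P (x, θ)) x d =
      Real.fourierChar (inner ℝ θ x) • (P (x, θ) * lineSymbol d θ + fstDeriv d P (x, θ)) := by
  rw [(hasFDerivAt_fourierChar_smul_slice hP θ x).fderiv]
  simp [lineSymbol, fstDeriv, real_inner_comm d θ, Circle.smul_def]
  ring

lemma IsBddCont.fourierChar_smul {F : V → ℂ} (hF : IsBddCont F) (θ : V) :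
    IsBddCont fun x => Real.fourierChar (inner ℝ θ x) • F x where
  continuous := by
    have := hF.continuous
    fun_prop
  bounded := by simpa only [Circle.norm_smul] using hF.bounded

variable [FiniteDimensional ℝ V] [MeasurableSpace V] [BorelSpace V]

lemma IsBddCont.integrable_mul_conj {F : V → ℂ} (hF : IsBddCont F) (u : 𝓢(V, ℂ)) :
    Integrable fun x => F x * conj (u x) := by
  obtain ⟨C, hC⟩ := hF.bounded
  have := hF.continuous
  have := u.continuous
  refine (u.integrable.norm.const_mul C).mono' (Continuous.aestronglyMeasurable (by fun_prop))
    (.of_forall fun x => ?_)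
  rw [norm_mul, RCLike.norm_conj]
  gcongr
  exact hC x

lemma integral_mul_conj_sub_lineDeriv {F : V → ℂ} (hF : IsBddCont F) (hdF : Differentiable ℝ F)
    {d : V} (hF' : IsBddCont fun x => fderiv ℝ F x d) (w : 𝓢(V, ℂ)) :
    ∫ x, F x * conj ((w - ∂_{d} w) x) = ∫ x, (F x + fderiv ℝ F x d) * conj (w x) := by
  have h_int := hF.integrable_mul_conj w
  have h_int' := hF.integrable_mul_conj (∂_{d} w)
  have hparts := integral_mul_fderiv_eq_neg_fderiv_mul_of_integrable (μ := volume) (v := d)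
    (g := fun x => conj (w x)) (hF'.integrable_mul_conj w)
    (by simpa only [fderiv_conj_apply] using h_int') h_int (fun x _ => hdF x)
    (fun x _ => (Complex.conjCLE : ℂ →L[ℝ] ℂ).differentiableAt.comp x w.differentiableAt)
  simp only [fderiv_conj_apply] at hparts
  simp only [sub_apply, map_sub, mul_sub, add_mul]
  rw [integral_sub h_int h_int', integral_add h_int (hF'.integrable_mul_conj w), hparts,
    sub_neg_eq_add]

lemma integral_fourierChar_smul_mul_conj_sub_lineDeriv {P : V × V → ℂ} (hP : ContDiff ℝ ∞ P)
    (hb : IsBddCont P) {d : V} (hb' : IsBddCont (fstDeriv d P)) (w : 𝓢(V, ℂ)) (θ : V) :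
    ∫ x, Real.fourierChar (inner ℝ θ x) • P (x, θ) * conj ((w - ∂_{d} w) x) =
      ∫ x, Real.fourierChar (inner ℝ θ x) •
        (P (x, θ) * lineSymbol d θ + fstDeriv d P (x, θ)) * conj (w x) := by
  let F (x : V) : ℂ := Real.fourierChar (inner ℝ θ x) • P (x, θ)
  have hslice : Continuous fun x : V => (x, θ) := by fun_prop
  have hF : IsBddCont F := (hb.comp hslice).fourierChar_smul θ
  have hF' : IsBddCont fun x => fderiv ℝ F x d := by
    have hfderiv (x : V) : fderiv ℝ F x d = Real.fourierChar (inner ℝ θ x) •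
        (P (x, θ) * (lineSymbol d θ - 1) + fstDeriv d P (x, θ)) := by
      refine (eq_sub_of_add_eq' (add_fderiv_fourierChar_smul_slice hP d θ x)).trans ?_
      rw [← smul_sub]
      ring_nf
    simp only [hfderiv]
    exact (((hb.comp hslice).mul (.const _)).add (hb'.comp hslice)).fourierChar_smul θ
  have hparts := integral_mul_conj_sub_lineDeriv hF
    (fun x => (hasFDerivAt_fourierChar_smul_slice hP θ x).differentiableAt) hF' w
  simpa only [F, add_fderiv_fourierChar_smul_slice hP] using hparts

lemma knForm_mul_cutoff_sub_lineDeriv {P : V × V → ℂ} (hP : ContDiff ℝ ∞ P) (hb : IsBddCont P)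
    {d : V} (hb' : IsBddCont (fstDeriv d P)) {Φ : V → ℂ} (hΦ : Continuous Φ)
    (hc : HasCompactSupport Φ) (v w : 𝓢(V, ℂ)) :
    knForm (fun X => P X * Φ X.2) v ⇑(w - ∂_{d} w) =
      knForm (fun X => P X * (lineSymbol d X.2 * Φ X.2)) v w +
        knForm (fun X => fstDeriv d P X * Φ X.2) v w := by
  have hb₁ : IsBddCont fun X : V × V => P X * (lineSymbol d X.2 * Φ X.2) :=
    hb.mul_cutoff ((contDiff_lineSymbol d).continuous.mul hΦ) hc.mul_left
  have hb₂ := hb'.mul_cutoff hΦ hc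
  rw [← knForm_add hb₁ hb₂, knForm_eq_integral_swap (hb.mul_cutoff hΦ hc),
    knForm_eq_integral_swap (hb₁.add hb₂)]
  congr! 3 with θ
  have hparts := congrArg (Φ θ * ·)
    (integral_fourierChar_smul_mul_conj_sub_lineDeriv hP hb hb' w θ)
  simp only [← integral_const_mul] at hparts
  refine (integral_congr_ae (.of_forall fun x => ?_)).trans
    (hparts.trans (integral_congr_ae (.of_forall fun x => ?_)))
  · simp only [Circle.smul_def, smul_eq_mul]
    ring
  · simp only [Circle.smul_def, smul_eq_mul]
    ring

lemma exists_norm_knForm_oneSubLineDerivs_sub_le (L : List V) {Φ : V → ℂ}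
    (hΦ : ContDiff ℝ ∞ Φ) (hc : HasCompactSupport Φ) (A : ℕ → ℝ) :
    ∃ C : ℝ, 0 ≤ C ∧ ∀ (P : V × V → ℂ) (μ : ℝ), 0 ≤ μ → IsSlowSymbol A μ P → ∀ g w : 𝓢(V, ℂ),
      ‖knForm (fun X => P X * Φ X.2) ⇑(𝓕 g : 𝓢(V, ℂ)) (oneSubLineDerivs L w) -
        knForm (fun X => P X * (listSymbol L X.2 * Φ X.2)) ⇑(𝓕 g : 𝓢(V, ℂ)) w‖
        ≤ C * μ * ((∫ x, ‖g x‖ ^ 2) + ∫ x, ‖w x‖ ^ 2) := by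
  induction L generalizing Φ A with
  | nil => exact ⟨0, le_rfl, fun P μ _ _ g w => by simp [oneSubLineDerivs]⟩
  | cons d L ih =>
    let A' (k : ℕ) : ℝ := ‖d‖ * A (k + 1)
    obtain ⟨C₁, hC₁, hline⟩ := ih (Φ := fun θ => lineSymbol d θ * Φ θ)
      ((contDiff_lineSymbol d).mul hΦ) hc.mul_left A
    obtain ⟨C₂, hC₂, hderiv⟩ := ih hΦ hc A'
    obtain ⟨C₃, hC₃, hrest⟩ := exists_norm_knForm_mul_cutoff_le
      (Φ := fun θ => listSymbol L θ * Φ θ) ((contDiff_listSymbol L).mul hΦ) hc.mul_left A'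
    refine ⟨C₁ + C₂ + C₃, by positivity, fun P μ hμ hP g w => ?_⟩
    have hP' := hP.fstDeriv d
    have hslow := hline P μ hμ hP g w
    have hslow' := hderiv (fstDeriv d P) μ hμ hP' g w
    have hsmall := hrest (fstDeriv d P) μ hμ (contDiff_slice hP'.contDiff)
      (fun x θ _ k => (norm_iteratedFDeriv_slice_le hP'.contDiff x θ k).trans
        (hP.norm_iteratedFDeriv_fstDeriv_le d k _)) g w
    rw [oneSubLineDerivs, List.foldr_cons, ← oneSubLineDerivs,
      knForm_mul_cutoff_sub_lineDeriv hP.contDiff hP.isBddCont hP'.isBddCont hΦ.continuous hc]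
    have hsymbol : (fun X : V × V => P X * (listSymbol (d :: L) X.2 * Φ X.2)) =
        fun X => P X * (listSymbol L X.2 * (lineSymbol d X.2 * Φ X.2)) := by
      ext X
      rw [listSymbol_cons]
      ring
    rw [hsymbol, add_sub_right_comm]
    refine (norm_add_le_of_le hslow
      ((norm_le_norm_add_norm_sub' _ _).trans (add_le_add hsmall hslow'))).trans_eq ?_
    ring

end IntegrationByParts

/-! ### Local lower bound for non-negative symbols -/

section Commutator

variable [FiniteDimensional ℝ V] [MeasurableSpace V] [BorelSpace V]

lemma fourier_fourierMultiplierCLM_apply (ψ w : 𝓢(V, ℂ)) (θ : V) :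
    𝓕 (fourierMultiplierCLM ℂ ψ w) θ = ψ θ * 𝓕 w θ := by
  rw [fourierMultiplierCLM_apply, fourier_fourierInv_eq,
    smulLeftCLM_apply_apply ψ.hasTemperateGrowth, smul_eq_mul]

lemma integral_norm_sq_fourierMultiplierCLM_le {ψ : 𝓢(V, ℂ)} {S : ℝ} (hS : ∀ θ, ‖ψ θ‖ ≤ S)
    (w : 𝓢(V, ℂ)) : ∫ x, ‖fourierMultiplierCLM ℂ ψ w x‖ ^ 2 ≤ S ^ 2 * ∫ x, ‖w x‖ ^ 2 := by
  rw [← integral_norm_sq_fourier, ← integral_norm_sq_fourier w, ← integral_const_mul]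
  refine integral_mono (integrable_norm_sq _) ((integrable_norm_sq _).const_mul _) fun θ => ?_
  simp only [fourier_fourierMultiplierCLM_apply, norm_mul, mul_pow]
  gcongr
  exact hS θ

variable {ψ ψc : 𝓢(V, ℂ)}

lemma fourier_apply_of_conj (hψ : ∀ θ, ψc θ = conj (ψ θ)) (u : V) :
    𝓕 ψc u = conj (𝓕 ψ (-u)) := by
  rw [fourier_coe, fourier_coe, Real.fourier_eq, Real.fourier_eq, ← integral_conj]
  simp only [hψ, Circle.smul_def, smul_eq_mul, map_mul, inner_neg_right, neg_neg,
    ← Circle.coe_inv_eq_conj, ← AddChar.map_neg_eq_inv]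

lemma conj_fourierMultiplierCLM_apply (hψ : ∀ θ, ψc θ = conj (ψ θ)) (w : 𝓢(V, ℂ)) (y : V) :
    conj (fourierMultiplierCLM ℂ ψ w y) = ∫ x, 𝓕 ψc (y - x) * conj (w x) := by
  have hinv : fourierMultiplierCLM ℂ ψ w y = 𝓕⁻ (fun θ => ψ θ * 𝓕 w θ) y := by
    rw [fourierMultiplierCLM_apply, fourierInv_coe]
    simp only [smulLeftCLM_apply ψ.hasTemperateGrowth]
    rfl
  simp only [hinv, fourierInv_mul_fourier, ← integral_conj, map_mul, fourier_apply_of_conj hψ,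
    neg_sub]

lemma integrable_prod_mul_kernel {q : V × V → ℂ} (hq : IsBddCont q) (κ g w : 𝓢(V, ℂ)) :
    Integrable (fun X : V × V => q X * (κ (X.2 - X.1) * g X.2 * conj (w X.1)))
      (volume.prod volume) := by
  obtain ⟨D, hD⟩ := hq.bounded
  obtain ⟨K, hK⟩ : ∃ K, ∀ u, ‖κ u‖ ≤ K := ⟨_, fun u => norm_le_seminorm ℝ κ u⟩
  have hwg : Integrable (fun X : V × V => ‖w X.1‖ * ‖g X.2‖) (volume.prod volume) :=
    w.integrable.norm.mul_prod g.integrable.norm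
  refine (hwg.const_mul (D * K)).mono' ?_ (.of_forall fun X => ?_)
  · have := hq.continuous
    have := κ.continuous
    have := g.continuous
    have := w.continuous
    exact Continuous.aestronglyMeasurable (by fun_prop)
  · have hD0 : 0 ≤ D := (norm_nonneg _).trans (hD X)
    calc _ = ‖q X‖ * (‖κ (X.2 - X.1)‖ * ‖g X.2‖ * ‖w X.1‖) := by
          simp only [norm_mul, RCLike.norm_conj]
      _ ≤ D * (K * ‖g X.2‖ * ‖w X.1‖) := by
          gcongr
          exacts [hD X, hK _]
      _ = _ := by ring

lemma knForm_mul_mul_eq_integral {p : V → ℂ}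
    (hp : IsBddCont p) (w : 𝓢(V, ℂ)) :
    knForm (fun X => p X.1 * (ψc X.2 * ψ X.2)) ⇑(𝓕 w : 𝓢(V, ℂ)) w =
      ∫ X : V × V, p X.1 * (𝓕 ψc (X.2 - X.1) * fourierMultiplierCLM ℂ ψ w X.2 * conj (w X.1))
        ∂(volume.prod volume) := by
  rw [integral_prod _ (integrable_prod_mul_kernel (hp.comp continuous_fst) _ _ _), knForm]
  congr 1
  ext x
  have hinv : 𝓕⁻ (fun θ => p x * (ψc θ * ψ θ) * 𝓕 w θ) x =
      p x * ∫ y, 𝓕 ψc (y - x) * fourierMultiplierCLM ℂ ψ w y := by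
    rw [← fourierInv_mul_fourier, Real.fourierInv_eq, Real.fourierInv_eq, ← integral_const_mul]
    simp only [fourier_fourierMultiplierCLM_apply, Circle.smul_def, smul_eq_mul]
    congr! 2
    ring
  rw [hinv, mul_assoc, ← integral_mul_const, ← integral_const_mul]

lemma integral_mul_norm_sq_fourierMultiplierCLM_eq (hψ : ∀ θ, ψc θ = conj (ψ θ)) {p : V → ℂ}
    (hp : IsBddCont p) (w : 𝓢(V, ℂ)) :
    ∫ y, p y * (‖fourierMultiplierCLM ℂ ψ w y‖ ^ 2 : ℝ) =
      ∫ X : V × V, p X.2 * (𝓕 ψc (X.2 - X.1) * fourierMultiplierCLM ℂ ψ w X.2 * conj (w X.1))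
        ∂(volume.prod volume) := by
  rw [integral_prod_symm _ (integrable_prod_mul_kernel (hp.comp continuous_snd) _ _ _)]
  congr 1
  ext y
  rw [← Complex.normSq_eq_norm_sq, ← Complex.mul_conj, conj_fourierMultiplierCLM_apply hψ,
    ← integral_const_mul, ← integral_const_mul]
  congr! 2
  ring

lemma exists_norm_knForm_sub_integral_le (hψ : ∀ θ, ψc θ = conj (ψ θ)) :
    ∃ C : ℝ, 0 ≤ C ∧ ∀ (p : V → ℂ) (μ : ℝ), 0 ≤ μ → IsBddCont p →
      (∀ x y, ‖p x - p y‖ ≤ μ * ‖x - y‖) → ∀ w : 𝓢(V, ℂ),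
      ‖knForm (fun X => p X.1 * (ψc X.2 * ψ X.2)) ⇑(𝓕 w : 𝓢(V, ℂ)) w -
          ∫ y, p y * (‖fourierMultiplierCLM ℂ ψ w y‖ ^ 2 : ℝ)‖ ≤ C * μ * ∫ x, ‖w x‖ ^ 2 := by
  obtain ⟨S, hS⟩ : ∃ S, ∀ θ, ‖ψ θ‖ ≤ S := ⟨_, fun θ => norm_le_seminorm ℝ ψ θ⟩
  have hmoment : Integrable fun u => ‖u‖ * ‖𝓕 ψc u‖ := by
    simpa using (𝓕 ψc : 𝓢(V, ℂ)).integrable_pow_mul volume 1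
  refine ⟨(∫ u, ‖u‖ * ‖𝓕 ψc u‖) * (S ^ 2 + 1), by positivity, ?_⟩
  intro p μ hμ hp hlip w
  set g := fourierMultiplierCLM ℂ ψ w
  have hfst := integrable_prod_mul_kernel (hp.comp continuous_fst) (𝓕 ψc) g w
  have hsnd := integrable_prod_mul_kernel (hp.comp continuous_snd) (𝓕 ψc) g w
  rw [knForm_mul_mul_eq_integral hp, integral_mul_norm_sq_fourierMultiplierCLM_eq hψ hp,
    ← integral_sub hfst hsnd]
  refine (congrArg norm (integral_prod _ (hfst.sub hsnd))).le.trans ?_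
  have hschur := schur_test (k := fun u => μ * (‖u‖ * ‖𝓕 ψc u‖)) (fun u => by positivity)
    (hmoment.const_mul _) (integrable_norm_sq g) (integrable_norm_sq w)
    (F := fun x y => p x * (𝓕 ψc (y - x) * g y * conj (w x)) -
      p y * (𝓕 ψc (y - x) * g y * conj (w x))) fun x y => by
      rw [← sub_mul]
      simp only [norm_mul, RCLike.norm_conj]
      calc _ ≤ μ * ‖y - x‖ * (‖𝓕 ψc (y - x)‖ * ‖g y‖ * ‖w x‖) := by
            gcongr; rw [norm_sub_rev y x]; exact hlip x y
        _ = _ := by ring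
  refine hschur.trans ?_
  rw [integral_const_mul]
  calc _ ≤ μ * (∫ u, ‖u‖ * ‖𝓕 ψc u‖) * (S ^ 2 * (∫ x, ‖w x‖ ^ 2) + ∫ x, ‖w x‖ ^ 2) := by
        gcongr; exact integral_norm_sq_fourierMultiplierCLM_le hS w
    _ = _ := by ring

lemma re_integral_mul_norm_sq_nonneg {p : V → ℝ} (hp : ∀ x, 0 ≤ p x) (g : V → ℂ) :
    0 ≤ (∫ y, (p y : ℂ) * (‖g y‖ ^ 2 : ℝ)).re := by
  simp only [← Complex.ofReal_mul, integral_complex_ofReal, Complex.ofReal_re]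
  exact integral_nonneg fun y => mul_nonneg (hp y) (by positivity)

end Commutator

section LocalBound

variable [FiniteDimensional ℝ V] [MeasurableSpace V] [BorelSpace V]

lemma exists_norm_knForm_sub_knForm_slice_zero_le {Φ : V → ℂ} (hΦ : ContDiff ℝ ∞ Φ)
    (hc : HasCompactSupport Φ) (A : ℕ → ℝ) :
    ∃ C : ℝ, 0 ≤ C ∧ ∀ (P : V × V → ℂ) (μ : ℝ), 0 ≤ μ → IsSlowSymbol A μ P → ∀ g w : 𝓢(V, ℂ),
      ‖knForm (fun X => P X * Φ X.2) ⇑(𝓕 g : 𝓢(V, ℂ)) w -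
        knForm (fun X => P (X.1, 0) * Φ X.2) ⇑(𝓕 g : 𝓢(V, ℂ)) w‖
        ≤ C * μ * ((∫ x, ‖g x‖ ^ 2) + ∫ x, ‖w x‖ ^ 2) := by
  obtain ⟨R, hR⟩ : ∃ R, ∀ θ ∈ tsupport Φ, ‖θ‖ ≤ R := hc.isBounded.exists_norm_le
  obtain ⟨C, hC, hsmall⟩ :=
    exists_norm_knForm_mul_cutoff_le hΦ hc fun k => if k = 0 then A 1 * R else A k
  refine ⟨C, hC, fun P μ hμ hP g w => ?_⟩
  have hfrozen : IsBddCont fun X : V × V => P (X.1, 0) := hP.isBddCont.comp (by fun_prop)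
  have hdiff : IsBddCont fun X : V × V => P X - P (X.1, 0) := by
    simpa only [neg_one_mul, ← sub_eq_add_neg] using
      hP.isBddCont.add ((IsBddCont.const (-1)).mul hfrozen)
  have hsplit : knForm (fun X => P X * Φ X.2) ⇑(𝓕 g : 𝓢(V, ℂ)) w =
      knForm (fun X => (P X - P (X.1, 0)) * Φ X.2) ⇑(𝓕 g : 𝓢(V, ℂ)) w +
        knForm (fun X => P (X.1, 0) * Φ X.2) ⇑(𝓕 g : 𝓢(V, ℂ)) w := by
    rw [← knForm_add (hdiff.mul_cutoff hΦ.continuous hc) (hfrozen.mul_cutoff hΦ.continuous hc)]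
    simp only [← add_mul, sub_add_cancel]
  rw [hsplit, add_sub_cancel_right]
  exact hsmall (fun X => P X - P (X.1, 0)) μ hμ
    (fun x => (contDiff_slice hP.contDiff x).sub (contDiff_const (c := P (x, 0))))
    (fun x θ hθ => hP.norm_iteratedFDeriv_slice_sub_le x (hR θ hθ)) g w

lemma exists_neg_le_re_knForm_mul_conj_mul {ψ : V → ℂ} (hψ : ContDiff ℝ ∞ ψ)
    (hc : HasCompactSupport ψ) (A : ℕ → ℝ) :
    ∃ C : ℝ, 0 ≤ C ∧ ∀ (P : V × V → ℝ) (μ : ℝ), 0 ≤ μ → IsSlowSymbol A μ (fun X => (P X : ℂ)) →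
      (∀ X, 0 ≤ P X) → ∀ w : 𝓢(V, ℂ), -(C * μ * ∫ x, ‖w x‖ ^ 2) ≤
        (knForm (fun X => P X * (conj (ψ X.2) * ψ X.2)) ⇑(𝓕 w : 𝓢(V, ℂ)) w).re := by
  have hψ' : ContDiff ℝ ∞ fun θ => conj (ψ θ) :=
    (Complex.conjCLE : ℂ →L[ℝ] ℂ).contDiff.comp hψ
  have hc' : HasCompactSupport fun θ => conj (ψ θ) := hc.comp_left (map_zero _)
  obtain ⟨C₁, hC₁, hfreeze⟩ := exists_norm_knForm_sub_knForm_slice_zero_le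
    (Φ := fun θ => conj (ψ θ) * ψ θ) (hψ'.mul hψ) hc.mul_left A
  obtain ⟨C₂, hC₂, hcomm⟩ := exists_norm_knForm_sub_integral_le
    (ψ := hc.toSchwartzMap hψ) (ψc := hc'.toSchwartzMap hψ') fun _ => rfl
  refine ⟨2 * C₁ + C₂ * |A 1|, by positivity, fun P μ hμ hP hP0 w => ?_⟩
  have hlip (x y : V) : ‖(P (x, 0) : ℂ) - P (y, 0)‖ ≤ μ * |A 1| * ‖x - y‖ := by
    calc _ ≤ μ * A 1 * ‖((x, 0) : V × V) - (y, 0)‖ := hP.norm_sub_le (x, 0) (y, 0)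
      _ = μ * A 1 * ‖x - y‖ := by simp [Prod.norm_def]
      _ ≤ _ := by gcongr; exact le_abs_self _
  have hfreeze_re := (abs_le.1 ((Complex.abs_re_le_norm _).trans (hfreeze _ μ hμ hP w w))).1
  have hcomm_re := (abs_le.1 ((Complex.abs_re_le_norm _).trans
    (hcomm (fun x => P (x, 0)) (μ * |A 1|) (by positivity) (hP.isBddCont.comp (by fun_prop))
      hlip w))).1
  have hpos := re_integral_mul_norm_sq_nonneg (fun y => hP0 (y, 0))
    (fourierMultiplierCLM ℂ (hc.toSchwartzMap hψ) w)
  simp only [Complex.sub_re, HasCompactSupport.toSchwartzMap_toFun] at hfreeze_re hcomm_re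
  linarith

/-- The weight `‖listSymbol L‖⁻²` on the right-hand side records the decay away from the support of
the cutoff; it comes from writing `𝓕⁻ v` as a derivative and integrating by parts. -/
lemma exists_neg_le_re_knForm_mul_sq {φ : V → ℝ} (hφ : ContDiff ℝ ∞ φ)
    (hc : HasCompactSupport φ) (L : List V) (A : ℕ → ℝ) :
    ∃ C : ℝ, 0 ≤ C ∧ ∀ (P : V × V → ℝ) (μ : ℝ), 0 ≤ μ → IsSlowSymbol A μ (fun X => (P X : ℂ)) →
      (∀ X, 0 ≤ P X) → ∀ v : 𝓢(V, ℂ), -(C * μ * ∫ θ, ‖v θ‖ ^ 2 / ‖listSymbol L θ‖ ^ 2) ≤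
        (knForm (fun X => P X * ((φ X.2 ^ 2 : ℝ) : ℂ)) v ⇑(𝓕⁻ v : 𝓢(V, ℂ))).re := by
  have hφ' : ContDiff ℝ ∞ fun θ => (φ θ : ℂ) := Complex.ofRealCLM.contDiff.comp hφ
  have hc' : HasCompactSupport fun θ => (φ θ : ℂ) := hc.comp_left Complex.ofReal_zero
  have hL : ContDiff ℝ ∞ fun θ => conj (listSymbol L θ) :=
    (Complex.conjCLE : ℂ →L[ℝ] ℂ).contDiff.comp (contDiff_listSymbol L)
  obtain ⟨C₁, hC₁, hparts⟩ := exists_norm_knForm_oneSubLineDerivs_sub_le L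
    (Φ := fun θ => conj (listSymbol L θ) * φ θ * φ θ) ((hL.mul hφ').mul hφ') hc'.mul_left A
  obtain ⟨C₂, hC₂, hpos⟩ := exists_neg_le_re_knForm_mul_conj_mul
    (ψ := fun θ => conj (listSymbol L θ) * φ θ) (hL.mul hφ') hc'.mul_left A
  refine ⟨2 * C₁ + C₂, by positivity, fun P μ hμ hP hP0 v => ?_⟩
  obtain ⟨w, hw⟩ := exists_oneSubLineDerivs_eq L (𝓕⁻ v)
  obtain rfl : 𝓕 (oneSubLineDerivs L w) = v := by rw [hw, fourier_fourierInv_eq]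
  rw [fourierInv_fourier_eq, integral_norm_sq_fourier_oneSubLineDerivs_div]
  have hform : knForm (fun X => P X * ((φ X.2 ^ 2 : ℝ) : ℂ))
        ⇑(𝓕 (oneSubLineDerivs L w) : 𝓢(V, ℂ)) (oneSubLineDerivs L w) =
      knForm (fun X => P X * (conj (listSymbol L X.2) * φ X.2 * φ X.2)) ⇑(𝓕 w : 𝓢(V, ℂ))
        (oneSubLineDerivs L w) :=
    knForm_congr _ fun x θ => by
      rw [fourier_oneSubLineDerivs]
      push_cast
      ring
  have hsymbol : (fun X : V × V => (P X : ℂ) *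
        (listSymbol L X.2 * (conj (listSymbol L X.2) * φ X.2 * φ X.2))) =
      fun X => P X * (conj (conj (listSymbol L X.2) * φ X.2) *
        (conj (listSymbol L X.2) * φ X.2)) := by
    ext X
    simp only [map_mul, Complex.conj_conj, Complex.conj_ofReal]
    ring
  have hparts_re := (abs_le.1 ((Complex.abs_re_le_norm _).trans (hparts _ μ hμ hP w w))).1
  rw [hsymbol, Complex.sub_re] at hparts_re
  rw [hform]
  linarith [hpos P μ hμ hP hP0 w]

end LocalBound

/-! ### Rescaling and averaging -/

section Weight

lemma listSymbol_append (L M : List V) (θ : V) :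
    listSymbol (L ++ M) θ = listSymbol L θ * listSymbol M θ := by
  induction L with
  | nil => simp
  | cons d L ih => simp [ih, mul_assoc]

lemma one_add_inner_sq_le_norm_lineSymbol_sq (d θ : V) :
    1 + inner ℝ d θ ^ 2 ≤ ‖lineSymbol d θ‖ ^ 2 := by
  rw [← Complex.normSq_eq_norm_sq, normSq_lineSymbol, mul_pow]
  have : 1 ≤ (2 * Real.pi) ^ 2 := one_le_pow₀ (by linarith [Real.pi_gt_three])
  gcongr
  exact le_mul_of_one_le_left (sq_nonneg _) this

lemma one_add_sum_inner_sq_le_norm_listSymbol_sq (L : List V) (θ : V) :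
    1 + (L.map fun d => inner ℝ d θ ^ 2).sum ≤ ‖listSymbol L θ‖ ^ 2 := by
  induction L with
  | nil => simp
  | cons d L ih =>
    have hsum : 0 ≤ (L.map fun d => inner ℝ d θ ^ 2).sum := by
      refine List.sum_nonneg fun t ht => ?_
      obtain ⟨e, -, rfl⟩ := List.mem_map.1 ht
      positivity
    rw [listSymbol_cons, norm_mul, mul_pow, List.map_cons, List.sum_cons]
    refine le_trans ?_ (mul_le_mul (one_add_inner_sq_le_norm_lineSymbol_sq d θ) ih
      (by positivity) (by positivity))
    nlinarith [mul_nonneg (sq_nonneg (inner ℝ d θ)) hsum]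

lemma exists_one_add_norm_sq_pow_le_norm_listSymbol_sq [FiniteDimensional ℝ V] (N : ℕ) :
    ∃ L : List V, ∀ θ, (1 + ‖θ‖ ^ 2) ^ N ≤ ‖listSymbol L θ‖ ^ 2 := by
  induction N with
  | zero => exact ⟨[], fun θ => by simp⟩
  | succ N ih =>
    obtain ⟨L, hL⟩ := ih
    let b := stdOrthonormalBasis ℝ V
    refine ⟨L ++ List.ofFn b, fun θ => ?_⟩
    have hbasis := one_add_sum_inner_sq_le_norm_listSymbol_sq (List.ofFn b) θ
    have hparseval : ∑ i, inner ℝ (b i) θ ^ 2 = ‖θ‖ ^ 2 := by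
      simpa using b.sum_sq_norm_inner_right θ
    rw [List.map_ofFn, List.sum_ofFn] at hbasis
    simp only [Function.comp_apply, hparseval] at hbasis
    rw [listSymbol_append, norm_mul, mul_pow, pow_succ]
    gcongr
    exact hL θ

end Weight

section Rescaling

/-- The symbol in phase-space coordinates centred at frequency `z`, with frequencies measured in
units of `R` and positions in units of `R⁻¹`. -/
noncomputable def rescale {α : Type*} (R : ℝ) (z : V) (P : V × V → α) (Y : V × V) : α :=
  P (R⁻¹ • Y.1, z + R • Y.2)

variable {R : ℝ}

lemma exists_comp_add_smul (u : 𝓢(V, ℂ)) (z : V) (hR : R ≠ 0) :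
    ∃ v : 𝓢(V, ℂ), ⇑v = fun θ => u (z + R • θ) := by
  let T : V ≃L[ℝ] V := ContinuousLinearEquiv.smulLeft (Units.mk0 R hR)
  have hT (θ : V) : T θ = R • θ := rfl
  refine ⟨compCLMOfContinuousLinearEquiv ℝ T (compSubConstCLM ℝ (-z) u), funext fun θ => ?_⟩
  simp [hT, add_comm]

variable [FiniteDimensional ℝ V] [MeasurableSpace V] [BorelSpace V]

lemma integral_comp_add_smul {F : Type*} [NormedAddCommGroup F] [NormedSpace ℝ F] (G : V → F)
    (z : V) (hR : 0 < R) :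
    ∫ θ, G (z + R • θ) = (R ^ finrank ℝ V)⁻¹ • ∫ ζ, G ζ := by
  rw [Measure.integral_comp_smul volume (fun u => G (z + u)) R, integral_add_left_eq_self,
    abs_of_pos (by positivity)]

lemma fourierInv_comp_add_smul (h : V → ℂ) (z y : V) (hR : 0 < R) :
    𝓕⁻ (fun θ => h (z + R • θ)) y =
      (R ^ finrank ℝ V)⁻¹ • Real.fourierChar (-inner ℝ z (R⁻¹ • y)) • 𝓕⁻ h (R⁻¹ • y) := by
  have hphase (θ : V) : Real.fourierChar (inner ℝ θ y) • h (z + R • θ) =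
      Real.fourierChar (-inner ℝ z (R⁻¹ • y)) •
        Real.fourierChar (inner ℝ (z + R • θ) (R⁻¹ • y)) • h (z + R • θ) := by
    rw [smul_smul, ← AddChar.map_add_eq_mul, inner_add_left, real_inner_smul_left,
      real_inner_smul_right, real_inner_smul_right, mul_inv_cancel_left₀ hR.ne',
      neg_add_cancel_left]
  simp only [Real.fourierInv_eq, hphase]
  simp only [Circle.smul_def, integral_smul]
  rw [integral_comp_add_smul
    (fun ζ => (Real.fourierChar (inner ℝ ζ (R⁻¹ • y)) : ℂ) • h ζ) z hR, smul_comm]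

lemma knForm_rescale (P : V × V → ℂ) (u : V → ℂ) (z : V) (hR : 0 < R) :
    knForm P u (𝓕⁻ u) = (R ^ finrank ℝ V : ℝ) *
      knForm (rescale R z P) (fun θ => u (z + R • θ)) (𝓕⁻ fun θ => u (z + R • θ)) := by
  let G (x : V) : ℂ := 𝓕⁻ (fun θ => P (x, θ) * u θ) x * conj (𝓕⁻ u x)
  set r : ℝ := R ^ finrank ℝ V with hr
  have hr0 : r ≠ 0 := by positivity
  have hpoint (y : V) : 𝓕⁻ (fun θ => rescale R z P (y, θ) * u (z + R • θ)) y *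
      conj (𝓕⁻ (fun θ => u (z + R • θ)) y) = (r⁻¹ * r⁻¹) • G (R⁻¹ • y) := by
    have hunit := Circle.coe_inv_eq_conj (Real.fourierChar (-inner ℝ z (R⁻¹ • y)))
    simp only [rescale]
    rw [fourierInv_comp_add_smul u z y hR,
      fourierInv_comp_add_smul (fun ζ => P (R⁻¹ • y, ζ) * u ζ) z y hR]
    simp only [Circle.smul_def, smul_eq_mul, Complex.real_smul, map_mul, Complex.conj_ofReal,
      ← hunit, Circle.coe_inv, Complex.ofReal_mul, ← hr, G]
    field_simp [Circle.coe_ne_zero]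
  have hscale := integral_comp_add_smul G 0 (inv_pos.2 hR)
  simp only [zero_add, inv_pow, inv_inv, ← hr] at hscale
  simp only [knForm, hpoint]
  rw [integral_smul, hscale, smul_smul, Complex.real_smul, ← mul_assoc, ← Complex.ofReal_mul,
    show r * (r⁻¹ * r⁻¹ * r) = 1 by field_simp, Complex.ofReal_one, one_mul]

lemma integral_comp_inv_smul_sub {F : Type*} [NormedAddCommGroup F] [NormedSpace ℝ F] (G : V → F)
    (ζ : V) (hR : 0 < R) :
    ∫ z, G (R⁻¹ • (ζ - z)) = (R ^ finrank ℝ V) • ∫ θ, G θ := by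
  rw [integral_sub_left_eq_self (fun u => G (R⁻¹ • u)) volume ζ, Measure.integral_comp_inv_smul,
    abs_of_pos (by positivity)]

variable {P : V × V → ℂ} {h : V → ℝ}

lemma integrable_knForm_mul_translate (hP : IsBddCont P) (v w : 𝓢(V, ℂ)) (hh : Continuous h)
    (hc : HasCompactSupport h) (hR : 0 < R) :
    Integrable (fun p : V × (V × V) => (Real.fourierChar (inner ℝ p.2.2 p.2.1) •
      (P p.2 * v p.2.2) * conj (w p.2.1)) * (h (R⁻¹ • (p.2.2 - p.1)) : ℂ))
      (volume.prod (volume.prod volume)) := by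
  have hP_cont := hP.continuous
  have hv := v.continuous
  have hw := w.continuous
  rw [integrable_prod_iff' (Continuous.aestronglyMeasurable (by fun_prop))]
  constructor
  · refine .of_forall fun X => ?_
    have htranslate : Integrable fun z => (h (R⁻¹ • (X.2 - z)) : ℂ) :=
      (((hh.integrable_of_hasCompactSupport hc).comp_smul
        (inv_ne_zero hR.ne')).comp_sub_left X.2).ofReal
    exact htranslate.const_mul
      (Real.fourierChar (inner ℝ X.2 X.1) • (P X * v X.2) * conj (w X.1))
  · simp only [norm_mul, Complex.norm_real, integral_const_mul]
    simp only [integral_comp_inv_smul_sub (fun θ => ‖h θ‖) _ hR, ← norm_mul]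
    exact (integrable_knForm hP v w).norm.mul_const _

lemma knForm_mul_translate_eq (hP : IsBddCont P) (v w : 𝓢(V, ℂ)) (hh : Continuous h)
    (hc : HasCompactSupport h) (z : V) :
    knForm (fun X => P X * (h (R⁻¹ • (X.2 - z)) : ℂ)) v w =
      ∫ X : V × V, (Real.fourierChar (inner ℝ X.2 X.1) • (P X * v X.2) * conj (w X.1)) *
        (h (R⁻¹ • (X.2 - z)) : ℂ) ∂(volume.prod volume) := by
  have hcutoff : IsBddCont fun θ => (h θ : ℂ) :=
    .of_hasCompactSupport (by fun_prop) (hc.comp_left Complex.ofReal_zero)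
  rw [knForm_eq_integral_prod
    (hP.mul (hcutoff.comp (g := fun X : V × V => R⁻¹ • (X.2 - z)) (by fun_prop)))]
  simp only [Circle.smul_def, smul_eq_mul]
  congr! 2
  ring

lemma integrable_knForm_translates (hP : IsBddCont P) (v w : 𝓢(V, ℂ)) (hh : Continuous h)
    (hc : HasCompactSupport h) (hR : 0 < R) :
    Integrable fun z => knForm (fun X => P X * (h (R⁻¹ • (X.2 - z)) : ℂ)) v w := by
  simp only [knForm_mul_translate_eq hP v w hh hc]
  exact (integrable_knForm_mul_translate hP v w hh hc hR).integral_prod_left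

lemma integral_knForm_translates (hP : IsBddCont P) (v w : 𝓢(V, ℂ)) (hh : Continuous h)
    (hc : HasCompactSupport h) (h1 : ∫ θ, h θ = 1) (hR : 0 < R) :
    ∫ z, knForm (fun X => P X * (h (R⁻¹ • (X.2 - z)) : ℂ)) v w =
      (R ^ finrank ℝ V : ℝ) * knForm P v w := by
  simp only [knForm_mul_translate_eq hP v w hh hc]
  rw [integral_integral_swap (integrable_knForm_mul_translate hP v w hh hc hR),
    knForm_eq_integral_prod hP, ← integral_const_mul]
  congr 1
  ext X
  rw [integral_const_mul, integral_complex_ofReal, integral_comp_inv_smul_sub h X.2 hR, h1,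
    smul_eq_mul, mul_one, mul_comm]

lemma integrable_norm_sq_div_one_add_norm_sq_pow (g : 𝓢(V, ℂ)) (N : ℕ) (z : V) (r : ℝ) :
    Integrable fun ζ => ‖g ζ‖ ^ 2 / (1 + ‖r • (ζ - z)‖ ^ 2) ^ N := by
  have hg := g.continuous
  refine (integrable_norm_sq g).mono' (Continuous.aestronglyMeasurable ?_)
    (.of_forall fun ζ => ?_)
  · exact Continuous.div (by fun_prop) (by fun_prop) fun ζ => by positivity
  · rw [Real.norm_of_nonneg (by positivity)]
    exact div_le_self (by positivity) (one_le_pow₀ (le_add_of_nonneg_right (by positivity)))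

lemma exists_neg_le_re_knForm_mul_translate_sq {φ : V → ℝ} (hφ : ContDiff ℝ ∞ φ)
    (hc : HasCompactSupport φ) (A : ℕ → ℝ) (N : ℕ) :
    ∃ C : ℝ, 0 ≤ C ∧ ∀ (a : V × V → ℝ) (R μ : ℝ) (z : V), 0 < R → 0 ≤ μ → (∀ X, 0 ≤ a X) →
      IsSlowSymbol A μ (rescale R z fun X => (a X : ℂ)) → ∀ f : 𝓢(V, ℂ),
      -(C * μ * ∫ ζ, ‖𝓕 f ζ‖ ^ 2 / (1 + ‖R⁻¹ • (ζ - z)‖ ^ 2) ^ N) ≤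
        (knForm (fun X => a X * ((φ (R⁻¹ • (X.2 - z)) ^ 2 : ℝ) : ℂ))
          ⇑(𝓕 f : 𝓢(V, ℂ)) f).re := by
  obtain ⟨L, hL⟩ := exists_one_add_norm_sq_pow_le_norm_listSymbol_sq (V := V) N
  obtain ⟨C, hC, hlocal⟩ := exists_neg_le_re_knForm_mul_sq hφ hc L A
  refine ⟨C, hC, fun a R μ z hR hμ ha hslow f => ?_⟩
  obtain ⟨v, hv⟩ := exists_comp_add_smul (𝓕 f) z hR.ne'
  have hform : knForm (fun X => a X * ((φ (R⁻¹ • (X.2 - z)) ^ 2 : ℝ) : ℂ)) ⇑(𝓕 f : 𝓢(V, ℂ)) f =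
      (R ^ finrank ℝ V : ℝ) * knForm (fun Y => ((rescale R z a Y : ℝ) : ℂ) * ((φ Y.2 ^ 2 : ℝ) : ℂ))
        v ⇑(𝓕⁻ v : 𝓢(V, ℂ)) := by
    have hinv : ⇑f = 𝓕⁻ ⇑(𝓕 f : 𝓢(V, ℂ)) := by rw [← fourierInv_coe, fourierInv_fourier_eq]
    have hsymbol : rescale R z (fun X => a X * ((φ (R⁻¹ • (X.2 - z)) ^ 2 : ℝ) : ℂ)) =
        fun Y => ((rescale R z a Y : ℝ) : ℂ) * ((φ Y.2 ^ 2 : ℝ) : ℂ) := by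
      ext Y
      simp only [rescale, add_sub_cancel_left, inv_smul_smul₀ hR.ne']
    conv_lhs => rw [hinv]
    rw [knForm_rescale _ _ z hR, hsymbol, ← hv, ← fourierInv_coe]
  have hweight : ∫ θ, ‖v θ‖ ^ 2 / ‖listSymbol L θ‖ ^ 2 ≤
      (R ^ finrank ℝ V)⁻¹ * ∫ ζ, ‖𝓕 f ζ‖ ^ 2 / (1 + ‖R⁻¹ • (ζ - z)‖ ^ 2) ^ N := by
    rw [← smul_eq_mul, ← integral_comp_add_smul
      (fun ζ => ‖𝓕 f ζ‖ ^ 2 / (1 + ‖R⁻¹ • (ζ - z)‖ ^ 2) ^ N) z hR]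
    simp only [hv, add_sub_cancel_left, inv_smul_smul₀ hR.ne']
    refine integral_mono_of_nonneg (.of_forall fun θ => by positivity) ?_ (.of_forall fun θ =>
      div_le_div_of_nonneg_left (by positivity) (by positivity) (hL θ))
    simpa [hv] using integrable_norm_sq_div_one_add_norm_sq_pow v N 0 1
  set I := ∫ ζ, ‖𝓕 f ζ‖ ^ 2 / (1 + ‖R⁻¹ • (ζ - z)‖ ^ 2) ^ N
  rw [hform, Complex.re_ofReal_mul]
  calc -(C * μ * I) = R ^ finrank ℝ V * -(C * μ * ((R ^ finrank ℝ V)⁻¹ * I)) := by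
        field_simp
    _ ≤ R ^ finrank ℝ V * -(C * μ * ∫ θ, ‖v θ‖ ^ 2 / ‖listSymbol L θ‖ ^ 2) := by gcongr
    _ ≤ _ := by
        gcongr
        exact hlocal (rescale R z a) μ hμ hslow (fun Y => ha _) v

end Rescaling

/-! ### Frequency shells -/

section Shell

/-- `z` has size comparable to `T`, up to the factor `c`. At the lowest scale `T = 1` the shell is
the full ball. -/
def InShell (c T : ℝ) (z : V) : Prop :=
  ‖z‖ ≤ c * T ∧ (T = 1 ∨ T ≤ c * ‖z‖)

variable {κ T : ℝ} {z ζ : V}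

lemma InShell.of_norm_sub_le {E : Type*} [NormedAddCommGroup E] {z ζ : E} (hζ : InShell 2 T ζ)
    (hT : 1 ≤ T) (h : ‖ζ - z‖ ≤ T / 4) : InShell 4 T z := by
  have hupper := norm_sub_le ζ (ζ - z)
  have hlower := norm_add_le z (ζ - z)
  rw [sub_sub_cancel] at hupper
  rw [add_sub_cancel] at hlower
  exact ⟨by linarith [hζ.1], hζ.2.imp_right fun _ => by linarith⟩

lemma norm_sub_eq_rpow_mul (hT : 0 < T) : ‖ζ - z‖ = T ^ κ * ‖(T ^ κ)⁻¹ • (ζ - z)‖ := by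
  have hR : 0 < T ^ κ := by positivity
  rw [norm_smul, norm_inv, Real.norm_of_nonneg hR.le, mul_inv_cancel_left₀ hR.ne']

lemma le_rpow_one_div_one_sub {X : ℝ} (hκ0 : 0 ≤ κ) (hκ1 : κ < 1) (hX : 1 ≤ X) :
    X ≤ X ^ (1 / (1 - κ)) := by
  have hp : 1 ≤ 1 / (1 - κ) := by
    rw [le_div_iff₀ (by linarith)]
    linarith
  simpa using Real.rpow_le_rpow_of_exponent_le hX hp

lemma InShell.sqrt_one_add_norm_sq_le (hz : InShell 4 T z) (hκ0 : 0 ≤ κ) (hκ1 : κ < 1)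
    (hT : 1 ≤ T) : √(1 + ‖ζ‖ ^ 2) ≤
      (8 * (1 + ‖(T ^ κ)⁻¹ • (ζ - z)‖ ^ 2)) ^ (1 / (1 - κ)) * T := by
  have hdist := norm_sub_eq_rpow_mul (κ := κ) (z := z) (ζ := ζ) (by linarith : 0 < T)
  set r := ‖(T ^ κ)⁻¹ • (ζ - z)‖
  have hr : 0 ≤ r := norm_nonneg _
  have hRT : T ^ κ ≤ T := Real.rpow_le_self_of_one_le hT hκ1.le
  have htri := norm_add_le z (ζ - z)
  rw [add_sub_cancel] at htri
  have hsqrt : √(1 + ‖ζ‖ ^ 2) ≤ 1 + ‖ζ‖ :=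
    Real.sqrt_le_iff.2 ⟨by positivity, by nlinarith [norm_nonneg ζ]⟩
  calc √(1 + ‖ζ‖ ^ 2) ≤ 1 + (4 * T + T * r) := by nlinarith [hz.1]
    _ ≤ 8 * (1 + r ^ 2) * T := by nlinarith [sq_nonneg (r - 1)]
    _ ≤ _ := by
        gcongr
        exact le_rpow_one_div_one_sub hκ0 hκ1 (by nlinarith)

lemma InShell.le_mul_sqrt_one_add_norm_sq (hz : InShell 4 T z) (hκ0 : 0 ≤ κ) (hκ1 : κ < 1)
    (hT : 1 ≤ T) :
    T ≤ (8 * (1 + ‖(T ^ κ)⁻¹ • (ζ - z)‖ ^ 2)) ^ (1 / (1 - κ)) * √(1 + ‖ζ‖ ^ 2) := by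
  have hT0 : 0 < T := by linarith
  have hdist := norm_sub_eq_rpow_mul (κ := κ) (z := z) (ζ := ζ) hT0
  set r := ‖(T ^ κ)⁻¹ • (ζ - z)‖
  have hX : 8 ≤ (8 * (1 + r ^ 2)) ^ (1 / (1 - κ)) := by
    refine le_trans ?_ (le_rpow_one_div_one_sub hκ0 hκ1 ?_) <;> nlinarith [sq_nonneg r]
  have hsqrt1 : 1 ≤ √(1 + ‖ζ‖ ^ 2) := Real.one_le_sqrt.2 (by nlinarith [sq_nonneg ‖ζ‖])
  rcases hz.2 with rfl | hTz
  · nlinarith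
  rcases le_total (T / 8) ‖ζ‖ with hlarge | hsmall
  · have hsqrt : ‖ζ‖ ≤ √(1 + ‖ζ‖ ^ 2) := Real.le_sqrt_of_sq_le (by linarith)
    nlinarith
  · -- Here `T` is bounded by a multiple of `‖ζ - z‖ = T ^ κ * r`, hence by a power of `r`.
    have htri := norm_sub_le ζ (ζ - z)
    rw [sub_sub_cancel] at htri
    have hR : 0 < T ^ κ := by positivity
    have hpow : T ^ (1 - κ) ≤ 8 * (1 + r ^ 2) := by
      rw [Real.rpow_sub hT0, Real.rpow_one, div_le_iff₀ hR]
      nlinarith [sq_nonneg (r - 1)]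
    calc T = (T ^ (1 - κ)) ^ (1 / (1 - κ)) := by
          rw [← Real.rpow_mul hT0.le, mul_one_div_cancel (by linarith), Real.rpow_one]
      _ ≤ (8 * (1 + r ^ 2)) ^ (1 / (1 - κ)) := by
          have : 0 ≤ 1 / (1 - κ) := one_div_nonneg.2 (by linarith)
          gcongr
      _ ≤ _ := le_mul_of_one_le_right (by positivity) hsqrt1

lemma rpow_le_rpow_abs_mul_rpow {t X B : ℝ} (ht : 0 < t) (hX : 0 < X) (hB : 0 < B)
    (htB : t ≤ X * B) (hBt : B ≤ X * t) (s : ℝ) : t ^ s ≤ X ^ |s| * B ^ s := by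
  rcases le_total 0 s with hs | hs
  · rw [abs_of_nonneg hs, ← Real.mul_rpow hX.le hB.le]
    exact Real.rpow_le_rpow ht.le htB hs
  · have hneg : (X * t) ^ s ≤ B ^ s := Real.rpow_le_rpow_of_nonpos hB hBt hs
    rw [Real.mul_rpow hX.le ht.le] at hneg
    rw [abs_of_nonpos hs, Real.rpow_neg hX.le, inv_mul_eq_div, le_div_iff₀ (by positivity)]
    linarith

lemma InShell.rpow_le (hz : InShell 4 T z) (hκ0 : 0 ≤ κ) (hκ1 : κ < 1) (hT : 1 ≤ T) (s : ℝ) :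
    T ^ (2 * s) ≤ (8 * (1 + ‖(T ^ κ)⁻¹ • (ζ - z)‖ ^ 2)) ^ (1 / (1 - κ) * |2 * s|) *
      (1 + ‖ζ‖ ^ 2) ^ s := by
  have hbracket : (1 + ‖ζ‖ ^ 2) ^ s = √(1 + ‖ζ‖ ^ 2) ^ (2 * s) := by
    rw [Real.rpow_mul (Real.sqrt_nonneg _), Real.rpow_two, Real.sq_sqrt (by positivity)]
  rw [hbracket, Real.rpow_mul (x := 8 * _) (by positivity)]
  exact rpow_le_rpow_abs_mul_rpow (by linarith) (by positivity) (by positivity)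
    (hz.le_mul_sqrt_one_add_norm_sq hκ0 hκ1 hT) (hz.sqrt_one_add_norm_sq_le hκ0 hκ1 hT) _

lemma exists_rpow_div_pow_le_of_inShell (V : Type*) [NormedAddCommGroup V] [InnerProductSpace ℝ V]
    (hκ0 : 0 ≤ κ) (hκ1 : κ < 1) (s : ℝ) (K : ℕ) :
    ∃ (N : ℕ) (C : ℝ), 0 ≤ C ∧ ∀ (T : ℝ) (z ζ : V), 1 ≤ T → InShell 4 T z →
      T ^ (2 * s) / (1 + ‖(T ^ κ)⁻¹ • (ζ - z)‖ ^ 2) ^ N ≤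
        C * (((1 + ‖(T ^ κ)⁻¹ • (ζ - z)‖ ^ 2) ^ K)⁻¹ * (1 + ‖ζ‖ ^ 2) ^ s) := by
  set e := 1 / (1 - κ) * |2 * s| with he
  refine ⟨⌈e⌉₊ + K, 8 ^ e, by positivity, fun T z ζ hT hz => ?_⟩
  have hle := hz.rpow_le (ζ := ζ) hκ0 hκ1 hT s
  set Q := 1 + ‖(T ^ κ)⁻¹ • (ζ - z)‖ ^ 2 with hQ
  have hQ1 : 1 ≤ Q := le_add_of_nonneg_right (by positivity)
  have hceil : Q ^ e ≤ Q ^ ⌈e⌉₊ := by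
    rw [← Real.rpow_natCast]
    exact Real.rpow_le_rpow_of_exponent_le hQ1 (Nat.le_ceil e)
  rw [← he, Real.mul_rpow (by norm_num) (by linarith)] at hle
  rw [div_le_iff₀ (by positivity)]
  calc T ^ (2 * s) ≤ 8 ^ e * Q ^ e * (1 + ‖ζ‖ ^ 2) ^ s := hle
    _ ≤ 8 ^ e * Q ^ ⌈e⌉₊ * (1 + ‖ζ‖ ^ 2) ^ s := by gcongr
    _ = _ := by
        rw [pow_add]
        field_simp

/-- A non-negative symbol living at frequencies of size `T`, which satisfies `IsSlowSymbol A μ`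
when frequencies are measured in units of `T ^ κ` and positions in units of `T ^ (-κ)`. -/
structure IsShellSymbol (A : ℕ → ℝ) (μ κ T : ℝ) (a : V × V → ℝ) : Prop where
  nonneg : ∀ X, 0 ≤ a X
  inShell : ∀ X, a X ≠ 0 → InShell 2 T X.2
  slow : ∀ z, IsSlowSymbol A μ (rescale (T ^ κ) z fun X => (a X : ℂ))

namespace IsShellSymbol

variable {A : ℕ → ℝ} {μ : ℝ} {a : V × V → ℝ}

lemma isBddCont (ha : IsShellSymbol A μ κ T a) (hT : 0 < T) : IsBddCont fun X => (a X : ℂ) := by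
  have hR : T ^ κ ≠ 0 := by positivity
  have hbdd : IsBddCont (rescale (T ^ κ) 0 fun X => (a X : ℂ)) :=
    ⟨(ha.slow 0).contDiff.continuous, (ha.slow 0).bounded⟩
  have hundo (X : V × V) :
      (a X : ℂ) = rescale (T ^ κ) 0 (fun X => (a X : ℂ)) (T ^ κ • X.1, (T ^ κ)⁻¹ • X.2) := by
    simp [rescale, inv_smul_smul₀ hR, smul_inv_smul₀ hR]
  rw [funext hundo]
  exact hbdd.comp (by fun_prop)

lemma mul_translate_eq_zero (ha : IsShellSymbol A μ κ T a) {φ : V → ℝ}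
    (hφ : ∀ θ, φ θ ≠ 0 → ‖θ‖ ≤ 1 / 4) (hκ1 : κ < 1) (hT : 1 ≤ T) (hz : ¬InShell 4 T z)
    (X : V × V) : a X * φ ((T ^ κ)⁻¹ • (X.2 - z)) = 0 := by
  by_contra hne
  refine hz ((ha.inShell X (left_ne_zero_of_mul hne)).of_norm_sub_le hT ?_)
  have hnear := hφ _ (right_ne_zero_of_mul hne)
  rw [norm_sub_eq_rpow_mul (κ := κ) (by linarith : 0 < T)]
  calc T ^ κ * ‖(T ^ κ)⁻¹ • (X.2 - z)‖ ≤ T * (1 / 4) := by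
        gcongr
        exact Real.rpow_le_self_of_one_le hT hκ1.le
    _ = T / 4 := by ring

end IsShellSymbol

end Shell

section ShellEstimate

lemma exists_weighted_schwartz (g : 𝓢(V, ℂ)) (s : ℝ) :
    ∃ g' : 𝓢(V, ℂ), ∀ ζ, g' ζ = (((1 + ‖ζ‖ ^ 2) ^ s : ℝ) : ℂ) * g ζ := by
  refine ⟨smulLeftCLM ℂ (fun ζ : V => ((1 + ‖ζ‖ ^ 2) ^ s : ℝ)) g, fun ζ => ?_⟩
  rw [smulLeftCLM_apply_apply (Function.hasTemperateGrowth_one_add_norm_sq_rpow V s),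
    Complex.real_smul]

variable [FiniteDimensional ℝ V] [MeasurableSpace V] [BorelSpace V]

/-- The squared Sobolev norm of order `s` of a function whose Fourier transform is `g`. -/
noncomputable def sobolevEnergy (s : ℝ) (g : V → ℂ) : ℝ :=
  ∫ ζ, (1 + ‖ζ‖ ^ 2) ^ s * ‖g ζ‖ ^ 2

lemma sobolevEnergy_nonneg (s : ℝ) (g : V → ℂ) : 0 ≤ sobolevEnergy s g :=
  integral_nonneg fun ζ => by positivity

lemma integrable_sobolevEnergy (s : ℝ) (g : 𝓢(V, ℂ)) :
    Integrable fun ζ => (1 + ‖ζ‖ ^ 2) ^ s * ‖g ζ‖ ^ 2 := by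
  obtain ⟨g', hg'⟩ := exists_weighted_schwartz g (s / 2)
  refine (integrable_norm_sq g').congr (.of_forall fun ζ => ?_)
  simp only [hg']
  rw [norm_mul, Complex.norm_real, Real.norm_of_nonneg (by positivity), mul_pow,
    ← Real.rpow_mul_natCast (by positivity)]
  norm_num

lemma integrable_inv_one_add_norm_sq_pow :
    Integrable fun u : V => ((1 + ‖u‖ ^ 2) ^ (finrank ℝ V + 1))⁻¹ := by
  have hdecay := integrable_rpow_neg_one_add_norm_sq (E := V) (μ := volume)
    (r := 2 * (finrank ℝ V + 1)) (by linarith)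
  refine hdecay.congr (.of_forall fun u => ?_)
  simp only
  rw [← Real.rpow_natCast _ (finrank ℝ V + 1), ← Real.rpow_neg (by positivity)]
  congr 1
  push_cast
  ring

lemma hasCompactSupport_sq {X : Type*} [TopologicalSpace X] {φ : X → ℝ}
    (hc : HasCompactSupport φ) : HasCompactSupport fun θ => φ θ ^ 2 := by
  have hmul : HasCompactSupport fun θ => φ θ * φ θ := hc.mul_right
  simpa only [sq] using hmul

lemma exists_contDiff_integral_sq_eq_one :
    ∃ φ : V → ℝ, ContDiff ℝ ∞ φ ∧ HasCompactSupport φ ∧ (∀ θ, φ θ ≠ 0 → ‖θ‖ ≤ 1 / 4) ∧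
      ∫ θ, φ θ ^ 2 = 1 := by
  let b : ContDiffBump (0 : V) := ⟨1 / 8, 1 / 4, by norm_num, by norm_num⟩
  have h_int : Integrable fun θ => b θ ^ 2 :=
    (b.continuous.pow 2).integrable_of_hasCompactSupport (hasCompactSupport_sq b.hasCompactSupport)
  have hpos : 0 < ∫ θ, b θ ^ 2 := by
    rw [integral_pos_iff_support_of_nonneg (fun θ => by positivity) h_int,
      Function.support_pow _ two_ne_zero, b.support_eq]
    exact Metric.measure_ball_pos _ _ b.rOut_pos
  refine ⟨fun θ => (√(∫ θ, b θ ^ 2))⁻¹ * b θ, contDiff_const.mul b.contDiff,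
    b.hasCompactSupport.mul_left, fun θ hθ => ?_, ?_⟩
  · by_contra hfar
    exact right_ne_zero_of_mul hθ (b.zero_of_le_dist (by simpa [b] using (not_le.1 hfar).le))
  · simp only [mul_pow, integral_const_mul, inv_pow, Real.sq_sqrt hpos.le,
      inv_mul_cancel₀ hpos.ne']

variable {κ : ℝ}

lemma exists_rpow_mul_integral_le_of_inShell (V : Type*) [NormedAddCommGroup V]
    [InnerProductSpace ℝ V] [FiniteDimensional ℝ V] [MeasurableSpace V] [BorelSpace V]
    (hκ0 : 0 ≤ κ) (hκ1 : κ < 1) (s : ℝ) (K : ℕ) :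
    ∃ (N : ℕ) (C : ℝ), 0 ≤ C ∧ ∀ (T : ℝ) (z : V), 1 ≤ T → InShell 4 T z → ∀ g : 𝓢(V, ℂ),
      T ^ (2 * s) * ∫ ζ, ‖g ζ‖ ^ 2 / (1 + ‖(T ^ κ)⁻¹ • (ζ - z)‖ ^ 2) ^ N ≤
        C * ∫ ζ, ((1 + ‖(T ^ κ)⁻¹ • (ζ - z)‖ ^ 2) ^ K)⁻¹ *
          ((1 + ‖ζ‖ ^ 2) ^ s * ‖g ζ‖ ^ 2) := by
  obtain ⟨N, C, hC, hle⟩ := exists_rpow_div_pow_le_of_inShell V hκ0 hκ1 s K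
  refine ⟨N, C, hC, fun T z hT hz g => ?_⟩
  have hbound (ζ : V) : ‖((1 + ‖(T ^ κ)⁻¹ • (ζ - z)‖ ^ 2) ^ K)⁻¹‖ ≤ 1 := by
    rw [norm_inv]
    refine inv_le_one_of_one_le₀ ?_
    rw [Real.norm_of_nonneg (by positivity)]
    exact one_le_pow₀ (le_add_of_nonneg_right (by positivity))
  have h_int : Integrable fun ζ => ((1 + ‖(T ^ κ)⁻¹ • (ζ - z)‖ ^ 2) ^ K)⁻¹ *
      ((1 + ‖ζ‖ ^ 2) ^ s * ‖g ζ‖ ^ 2) :=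
    (integrable_sobolevEnergy s g).bdd_mul (c := 1) (Continuous.aestronglyMeasurable
      (Continuous.inv₀ (by fun_prop) fun ζ => by positivity)) (.of_forall hbound)
  rw [← integral_const_mul, ← integral_const_mul]
  refine integral_mono ((integrable_norm_sq_div_one_add_norm_sq_pow g N z _).const_mul _)
    (h_int.const_mul _) fun ζ => ?_
  have hmul := mul_le_mul_of_nonneg_right (hle T z ζ hT hz) (sq_nonneg ‖g ζ‖)
  calc _ = T ^ (2 * s) / (1 + ‖(T ^ κ)⁻¹ • (ζ - z)‖ ^ 2) ^ N * ‖g ζ‖ ^ 2 := by ring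
    _ ≤ _ := hmul
    _ = _ := by ring

lemma exists_neg_le_re_knForm_shell_translate {φ : V → ℝ} (hφ : ContDiff ℝ ∞ φ)
    (hc : HasCompactSupport φ) (hsupp : ∀ θ, φ θ ≠ 0 → ‖θ‖ ≤ 1 / 4) (hκ0 : 0 ≤ κ) (hκ1 : κ < 1)
    (A : ℕ → ℝ) (s : ℝ) (K : ℕ) :
    ∃ C : ℝ, 0 ≤ C ∧ ∀ (T μ : ℝ) (a : V × V → ℝ), 1 ≤ T → 0 ≤ μ → IsShellSymbol A μ κ T a →
      ∀ (f : 𝓢(V, ℂ)) (z : V),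
      -(C * μ * T ^ (-(2 * s)) * ∫ ζ, ((1 + ‖(T ^ κ)⁻¹ • (ζ - z)‖ ^ 2) ^ K)⁻¹ *
          ((1 + ‖ζ‖ ^ 2) ^ s * ‖𝓕 f ζ‖ ^ 2)) ≤
        (knForm (fun X => a X * ((φ ((T ^ κ)⁻¹ • (X.2 - z)) ^ 2 : ℝ) : ℂ))
          ⇑(𝓕 f : 𝓢(V, ℂ)) f).re := by
  obtain ⟨N, D, hD, hweight⟩ := exists_rpow_mul_integral_le_of_inShell V hκ0 hκ1 s K
  obtain ⟨C, hC, hpiece⟩ := exists_neg_le_re_knForm_mul_translate_sq hφ hc A N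
  refine ⟨C * D, by positivity, fun T μ a hT hμ ha f z => ?_⟩
  have hT0 : 0 < T := by linarith
  by_cases hz : InShell 4 T z
  · refine le_trans (neg_le_neg ?_)
      (hpiece a (T ^ κ) μ z (by positivity) hμ ha.nonneg (ha.slow z) f)
    calc C * μ * ∫ ζ, ‖𝓕 f ζ‖ ^ 2 / (1 + ‖(T ^ κ)⁻¹ • (ζ - z)‖ ^ 2) ^ N
        = C * μ * T ^ (-(2 * s)) *
          (T ^ (2 * s) * ∫ ζ, ‖𝓕 f ζ‖ ^ 2 / (1 + ‖(T ^ κ)⁻¹ • (ζ - z)‖ ^ 2) ^ N) := by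
          rw [Real.rpow_neg hT0.le]
          field_simp
      _ ≤ C * μ * T ^ (-(2 * s)) * (D * ∫ ζ, ((1 + ‖(T ^ κ)⁻¹ • (ζ - z)‖ ^ 2) ^ K)⁻¹ *
          ((1 + ‖ζ‖ ^ 2) ^ s * ‖𝓕 f ζ‖ ^ 2)) := by
          exact mul_le_mul_of_nonneg_left (hweight T z hT hz (𝓕 f)) (by positivity)
      _ = _ := by ring
  · have hzero (X : V × V) : (a X : ℂ) * ((φ ((T ^ κ)⁻¹ • (X.2 - z)) ^ 2 : ℝ) : ℂ) = 0 := by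
      rw [← Complex.ofReal_mul, sq, ← mul_assoc, ha.mul_translate_eq_zero hsupp hκ1 hT hz,
        zero_mul, Complex.ofReal_zero]
    simp only [hzero, knForm, zero_mul, Real.fourierInv_eq, smul_zero, integral_zero,
      Complex.zero_re, Left.neg_nonpos_iff]
    positivity

lemma neg_le_re_knForm_of_translates {P : V × V → ℂ} (hP : IsBddCont P) (v w : 𝓢(V, ℂ))
    {h k E : V → ℝ} (hh : Continuous h) (hc : HasCompactSupport h) (h1 : ∫ θ, h θ = 1) {R c : ℝ}
    (hR : 0 < R) (hk : Integrable k) (hE : Integrable E)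
    (hle : ∀ z, -(c * ∫ ζ, k (R⁻¹ • (ζ - z)) * E ζ) ≤
      (knForm (fun X => P X * (h (R⁻¹ • (X.2 - z)) : ℂ)) v w).re) :
    -(c * ((∫ u, k u) * ∫ ζ, E ζ)) ≤ (knForm P v w).re := by
  have hk' : Integrable fun u => k (R⁻¹ • u) := hk.comp_smul (inv_ne_zero hR.ne')
  have hdouble := integrable_sub_mul_snd hk' hE
  have htranslates := integrable_knForm_translates hP v w hh hc hR
  have hleft : ∫ z, ∫ ζ, k (R⁻¹ • (ζ - z)) * E ζ =
      R ^ finrank ℝ V * ((∫ u, k u) * ∫ ζ, E ζ) := by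
    rw [← integral_prod _ hdouble, integral_sub_mul_snd hk' hE, Measure.integral_comp_inv_smul,
      abs_of_pos (by positivity), smul_eq_mul, mul_assoc]
  have hright : ∫ z, (knForm (fun X => P X * (h (R⁻¹ • (X.2 - z)) : ℂ)) v w).re =
      R ^ finrank ℝ V * (knForm P v w).re := by
    rw [← Complex.re_ofReal_mul, ← integral_knForm_translates hP v w hh hc h1 hR]
    exact Complex.reCLM.integral_comp_comm htranslates
  have hmono := integral_mono (hdouble.integral_prod_left.const_mul c).neg htranslates.re hle
  simp only [Pi.neg_apply, integral_neg, integral_const_mul, hleft] at hmono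
  refine le_of_mul_le_mul_left ?_ (by positivity : 0 < R ^ finrank ℝ V)
  calc _ = -(c * (R ^ finrank ℝ V * ((∫ u, k u) * ∫ ζ, E ζ))) := by ring
    _ ≤ _ := hmono
    _ = _ := hright

theorem exists_neg_le_re_knForm_shell (hκ0 : 0 ≤ κ) (hκ1 : κ < 1) (A : ℕ → ℝ) (s : ℝ) :
    ∃ C : ℝ, 0 ≤ C ∧ ∀ (T μ : ℝ) (a : V × V → ℝ), 1 ≤ T → 0 ≤ μ → IsShellSymbol A μ κ T a →
      ∀ f : 𝓢(V, ℂ), -(C * μ * T ^ (-(2 * s)) * sobolevEnergy s ⇑(𝓕 f : 𝓢(V, ℂ))) ≤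
        (knForm (fun X => (a X : ℂ)) ⇑(𝓕 f : 𝓢(V, ℂ)) f).re := by
  obtain ⟨φ, hφ, hc, hsupp, hφ1⟩ := exists_contDiff_integral_sq_eq_one (V := V)
  obtain ⟨C, hC, htranslate⟩ := exists_neg_le_re_knForm_shell_translate hφ hc hsupp hκ0 hκ1 A s
    (finrank ℝ V + 1)
  have hkernel := integrable_inv_one_add_norm_sq_pow (V := V)
  refine ⟨C * ∫ u : V, ((1 + ‖u‖ ^ 2) ^ (finrank ℝ V + 1))⁻¹,
    mul_nonneg hC (integral_nonneg fun u => by positivity), fun T μ a hT hμ ha f => ?_⟩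
  have hT0 : 0 < T := by linarith
  have haverage := neg_le_re_knForm_of_translates (ha.isBddCont hT0) (𝓕 f) f
    (hφ.continuous.pow 2) (hasCompactSupport_sq hc) hφ1 (by positivity) hkernel
    (integrable_sobolevEnergy s (𝓕 f)) (htranslate T μ a hT hμ ha f)
  refine le_trans (le_of_eq ?_) haverage
  rw [sobolevEnergy]
  ring

end ShellEstimate

/-! ### Summation over dyadic shells -/

section DyadicPartition

/-- A smooth cutoff equal to `1` on the unit ball and vanishing outside the ball of radius `2`. -/
def unitCutoff (V : Type*) [NormedAddCommGroup V] : ContDiffBump (0 : V) :=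
  ⟨1, 2, one_pos, one_lt_two⟩

lemma unitCutoff_eq_one {u : V} (hu : ‖u‖ ≤ 1) : unitCutoff V u = 1 :=
  (unitCutoff V).one_of_mem_closedBall (by simpa [unitCutoff] using hu)

lemma unitCutoff_eq_zero {u : V} (hu : 2 ≤ ‖u‖) : unitCutoff V u = 0 :=
  (unitCutoff V).zero_of_le_dist (by simpa [unitCutoff] using hu)

lemma norm_two_smul (u : V) : ‖(2 : ℝ) • u‖ = 2 * ‖u‖ := by
  rw [norm_smul, Real.norm_ofNat]

/-- The shape of the Littlewood–Paley cutoffs at unit scale; only the index `0`, which also covers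
the low frequencies, differs from the others. -/
noncomputable def dyadicProfile : ℕ → V → ℝ
  | 0, u => unitCutoff V u
  | _ + 1, u => unitCutoff V u - unitCutoff V ((2 : ℝ) • u)

lemma contDiff_dyadicProfile (j : ℕ) : ContDiff ℝ ∞ (dyadicProfile j : V → ℝ) := by
  have hsmooth : ContDiff ℝ ∞ (unitCutoff V) := (unitCutoff V).contDiff
  cases j with
  | zero => exact hsmooth
  | succ j => exact hsmooth.sub (hsmooth.comp (contDiff_const_smul (2 : ℝ)))

lemma dyadicProfile_nonneg (j : ℕ) (u : V) : 0 ≤ dyadicProfile j u := by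
  cases j with
  | zero => exact (unitCutoff V).nonneg
  | succ j =>
    rw [dyadicProfile, sub_nonneg]
    rcases le_total ‖u‖ 1 with hu | hu
    · rw [unitCutoff_eq_one hu]
      exact (unitCutoff V).le_one
    · rw [unitCutoff_eq_zero (by rw [norm_two_smul]; linarith)]
      exact (unitCutoff V).nonneg

lemma dyadicProfile_eq_zero_of_two_le (j : ℕ) {u : V} (hu : 2 ≤ ‖u‖) : dyadicProfile j u = 0 := by
  cases j with
  | zero => exact unitCutoff_eq_zero hu
  | succ j =>
    rw [dyadicProfile, unitCutoff_eq_zero hu,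
      unitCutoff_eq_zero (by rw [norm_two_smul]; linarith), sub_zero]

lemma dyadicProfile_succ_eq_zero_of_le_half (j : ℕ) {u : V} (hu : ‖u‖ ≤ 1 / 2) :
    dyadicProfile (j + 1) u = 0 := by
  rw [dyadicProfile, unitCutoff_eq_one (by linarith),
    unitCutoff_eq_one (by rw [norm_two_smul]; linarith), sub_self]

/-- The Littlewood–Paley cutoff to frequencies of size `2 ^ j`. -/
noncomputable def dyadicCutoff (j : ℕ) (ζ : V) : ℝ := dyadicProfile j (((2 : ℝ) ^ j)⁻¹ • ζ)

lemma dyadicCutoff_nonneg (j : ℕ) (ζ : V) : 0 ≤ dyadicCutoff j ζ :=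
  dyadicProfile_nonneg _ _

lemma continuous_dyadicCutoff (j : ℕ) : Continuous (dyadicCutoff j : V → ℝ) :=
  (contDiff_dyadicProfile j).continuous.comp (by fun_prop)

lemma sum_dyadicCutoff (J : ℕ) (ζ : V) :
    ∑ j ∈ Finset.range (J + 1), dyadicCutoff j ζ = unitCutoff V (((2 : ℝ) ^ J)⁻¹ • ζ) := by
  induction J with
  | zero => simp [dyadicCutoff, dyadicProfile]
  | succ J ih =>
    have hscale : (2 : ℝ) * (2 ^ (J + 1))⁻¹ = (2 ^ J)⁻¹ := by
      rw [pow_succ]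
      field_simp
    rw [Finset.sum_range_succ, ih, dyadicCutoff, dyadicProfile, smul_smul, hscale,
      add_sub_cancel]

lemma norm_inv_two_pow_smul (j : ℕ) (ζ : V) : ‖((2 : ℝ) ^ j)⁻¹ • ζ‖ = ‖ζ‖ / 2 ^ j := by
  rw [norm_smul, norm_inv, norm_pow, Real.norm_ofNat, inv_mul_eq_div]

lemma inShell_of_dyadicCutoff_ne_zero {j : ℕ} {ζ : V} (h : dyadicCutoff j ζ ≠ 0) :
    InShell 2 (2 ^ j) ζ := by
  have hp : (0 : ℝ) < 2 ^ j := by positivity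
  constructor
  · contrapose! h
    refine dyadicProfile_eq_zero_of_two_le j ?_
    rw [norm_inv_two_pow_smul, le_div_iff₀ hp]
    exact h.le
  · rcases j with _ | j
    · exact .inl (pow_zero _)
    · right
      contrapose! h
      refine dyadicProfile_succ_eq_zero_of_le_half j ?_
      rw [norm_inv_two_pow_smul, div_le_iff₀ hp]
      linarith

lemma tendsto_sum_dyadicCutoff (ζ : V) :
    Filter.Tendsto (fun J => ∑ j ∈ Finset.range (J + 1), dyadicCutoff j ζ) Filter.atTop
      (nhds 1) := by
  refine tendsto_const_nhds.congr' ?_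
  have hpow := tendsto_pow_atTop_atTop_of_one_lt (one_lt_two : (1 : ℝ) < 2)
  filter_upwards [hpow.eventually_ge_atTop ‖ζ‖] with J hJ
  rw [sum_dyadicCutoff, unitCutoff_eq_one]
  rwa [norm_inv_two_pow_smul, div_le_one (by positivity)]

end DyadicPartition

section Summation

variable [FiniteDimensional ℝ V] [MeasurableSpace V] [BorelSpace V]

lemma tendsto_knForm_mul {P : V × V → ℂ} (hP : IsBddCont P) (v w : 𝓢(V, ℂ)) {h : ℕ → V → ℝ}
    (hcont : ∀ J, Continuous (h J)) (hle : ∀ J ζ, |h J ζ| ≤ 1)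
    (hlim : ∀ ζ, Filter.Tendsto (fun J => h J ζ) Filter.atTop (nhds 1)) :
    Filter.Tendsto (fun J => knForm (fun X => P X * (h J X.2 : ℂ)) v w) Filter.atTop
      (nhds (knForm P v w)) := by
  have hh (J : ℕ) : IsBddCont fun ζ => (h J ζ : ℂ) :=
    ⟨Complex.continuous_ofReal.comp (hcont J), 1, fun ζ => by simpa using hle J ζ⟩
  have hPh (J : ℕ) : IsBddCont fun X : V × V => P X * (h J X.2 : ℂ) :=
    hP.mul ((hh J).comp continuous_snd)
  simp only [knForm_eq_integral_prod hP, fun J => knForm_eq_integral_prod (hPh J)]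
  refine tendsto_integral_of_dominated_convergence _
    (fun J => (integrable_knForm (hPh J) v w).aestronglyMeasurable)
    (integrable_knForm hP v w).norm (fun J => .of_forall fun X => ?_) (.of_forall fun X => ?_)
  · simp only [norm_mul, Circle.norm_smul, Complex.norm_real, Real.norm_eq_abs]
    gcongr
    exact mul_le_of_le_one_right (norm_nonneg _) (hle J X.2)
  · have hlimX : Filter.Tendsto (fun J => (h J X.2 : ℂ)) Filter.atTop (nhds 1) := by
      exact_mod_cast (Complex.continuous_ofReal.tendsto 1).comp (hlim X.2)
    have hprod := hlimX.const_mul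
      (Real.fourierChar (inner ℝ X.2 X.1) • (P X * v X.2) * conj (w X.1))
    rw [mul_one] at hprod
    refine hprod.congr fun J => ?_
    simp only [Circle.smul_def, smul_eq_mul]
    ring

lemma tendsto_knForm_mul_of_norm_le {P : V × V → ℂ} (hP : Continuous P) {M r : ℝ}
    (hM : ∀ X, ‖P X‖ ≤ M * (1 + ‖X.2‖ ^ 2) ^ r) (v w : 𝓢(V, ℂ)) {h : ℕ → V → ℝ}
    (hcont : ∀ J, Continuous (h J)) (hle : ∀ J ζ, |h J ζ| ≤ 1)
    (hlim : ∀ ζ, Filter.Tendsto (fun J => h J ζ) Filter.atTop (nhds 1)) :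
    Filter.Tendsto (fun J => knForm (fun X => P X * (h J X.2 : ℂ)) v w) Filter.atTop
      (nhds (knForm P v w)) := by
  obtain ⟨v', hv'⟩ := exists_weighted_schwartz v r
  set Q : V × V → ℂ := fun X => P X * (((1 + ‖X.2‖ ^ 2) ^ (-r) : ℝ) : ℂ)
  have hcancel (ζ : V) : (1 + ‖ζ‖ ^ 2) ^ (-r) * (1 + ‖ζ‖ ^ 2) ^ r = 1 := by
    rw [← Real.rpow_add (by positivity), neg_add_cancel, Real.rpow_zero]
  have hQ : IsBddCont Q := by
    refine ⟨hP.mul (Complex.continuous_ofReal.comp (Continuous.rpow_const (by fun_prop)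
      fun X => .inl (by positivity))), M, fun X => ?_⟩
    rw [norm_mul, Complex.norm_real, Real.norm_of_nonneg (by positivity)]
    calc _ ≤ M * (1 + ‖X.2‖ ^ 2) ^ r * (1 + ‖X.2‖ ^ 2) ^ (-r) := by gcongr; exact hM X
      _ = M := by rw [mul_assoc, mul_comm (_ ^ r), hcancel, mul_one]
  have hswap (c : V → ℂ) :
      knForm (fun X => P X * c X.2) v w = knForm (fun X => Q X * c X.2) v' w := by
    refine knForm_congr w fun x θ => ?_
    have hcancel' : (((1 + ‖θ‖ ^ 2) ^ (-r) : ℝ) : ℂ) * (((1 + ‖θ‖ ^ 2) ^ r : ℝ) : ℂ) = 1 := by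
      rw [← Complex.ofReal_mul, hcancel, Complex.ofReal_one]
    rw [hv']
    linear_combination (-P (x, θ) * c θ * v θ) * hcancel'
  have hlimit : knForm P v w = knForm Q v' w := by simpa using hswap fun _ => 1
  simp only [hlimit, fun J => hswap fun ζ => (h J ζ : ℂ)]
  exact tendsto_knForm_mul hQ v' w hcont hle hlim

lemma isBddCont_sum {X : Type*} [TopologicalSpace X] {P : ℕ → X → ℂ} (hP : ∀ j, IsBddCont (P j))
    (J : ℕ) : IsBddCont fun x => ∑ j ∈ Finset.range J, P j x := by
  induction J with
  | zero => simpa using IsBddCont.const 0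
  | succ J ih => simpa only [Finset.sum_range_succ] using ih.add (hP J)

lemma knForm_sum {P : ℕ → V × V → ℂ} (hP : ∀ j, IsBddCont (P j)) (v w : 𝓢(V, ℂ)) (J : ℕ) :
    knForm (fun X => ∑ j ∈ Finset.range J, P j X) v w =
      ∑ j ∈ Finset.range J, knForm (P j) v w := by
  induction J with
  | zero => simp [knForm, Real.fourierInv_eq]
  | succ J ih => simp only [Finset.sum_range_succ, knForm_add (isBddCont_sum hP J) (hP J), ih]

theorem exists_neg_le_re_knForm {κ t s : ℝ} (hκ0 : 0 ≤ κ) (hκ1 : κ < 1) (hts : t < 2 * s)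
    {F : V × V → ℝ} (hF : Continuous F) {M r : ℝ}
    (hM : ∀ X, |F X| ≤ M * (1 + ‖X.2‖ ^ 2) ^ r) {A : ℕ → ℝ}
    (hshell : ∀ j : ℕ, IsShellSymbol A (((2 : ℝ) ^ j) ^ t) κ (2 ^ j)
      fun X => F X * dyadicCutoff j X.2) :
    ∃ C : ℝ, 0 ≤ C ∧ ∀ f : 𝓢(V, ℂ), -(C * sobolevEnergy s ⇑(𝓕 f : 𝓢(V, ℂ))) ≤
      (knForm (fun X => (F X : ℂ)) ⇑(𝓕 f : 𝓢(V, ℂ)) f).re := by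
  obtain ⟨C, hC, hpiece⟩ := exists_neg_le_re_knForm_shell (V := V) hκ0 hκ1 A s
  set q : ℝ := 2 ^ (t - 2 * s) with hq
  have hq0 : 0 < q := by positivity
  have hq1 : q < 1 := Real.rpow_lt_one_of_one_lt_of_neg one_lt_two (by linarith)
  have hgain (j : ℕ) : ((2 : ℝ) ^ j) ^ t * ((2 : ℝ) ^ j) ^ (-(2 * s)) = q ^ j := by
    rw [← Real.rpow_add (by positivity), hq, ← sub_eq_add_neg, ← Real.rpow_natCast_mul two_pos.le,
      ← Real.rpow_mul_natCast two_pos.le, mul_comm]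
  refine ⟨C * (1 - q)⁻¹, mul_nonneg hC (inv_nonneg.2 (by linarith)), fun f => ?_⟩
  set W := sobolevEnergy s ⇑(𝓕 f : 𝓢(V, ℂ))
  have hW : 0 ≤ W := sobolevEnergy_nonneg _ _
  have hpartial (J : ℕ) : -(C * (1 - q)⁻¹ * W) ≤ (knForm (fun X => (F X : ℂ) *
      ((∑ j ∈ Finset.range (J + 1), dyadicCutoff j X.2 : ℝ) : ℂ)) ⇑(𝓕 f : 𝓢(V, ℂ)) f).re := by
    have hgeom : ∑ j ∈ Finset.range (J + 1), q ^ j ≤ (1 - q)⁻¹ := by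
      rw [← tsum_geometric_of_lt_one hq0.le hq1]
      exact (summable_geometric_of_lt_one hq0.le hq1).sum_le_tsum _ fun j _ => by positivity
    simp only [Complex.ofReal_sum, Finset.mul_sum, ← Complex.ofReal_mul]
    rw [knForm_sum (fun j => (hshell j).isBddCont (by positivity)), Complex.re_sum]
    calc -(C * (1 - q)⁻¹ * W) ≤ -(C * (∑ j ∈ Finset.range (J + 1), q ^ j) * W) := by gcongr
      _ = ∑ j ∈ Finset.range (J + 1), -(C * q ^ j * W) := by
          rw [Finset.mul_sum, Finset.sum_mul, Finset.sum_neg_distrib]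
      _ ≤ _ := Finset.sum_le_sum fun j _ => by
          rw [← hgain, ← mul_assoc]
          exact hpiece _ _ _ (one_le_pow₀ one_le_two) (by positivity) (hshell j) f
  have hlimit := tendsto_knForm_mul_of_norm_le (P := fun X => (F X : ℂ)) (by fun_prop)
    (fun X => by simpa using hM X) (𝓕 f) f
    (h := fun J ζ => ∑ j ∈ Finset.range (J + 1), dyadicCutoff j ζ)
    (fun J => continuous_finsetSum _ fun j _ => continuous_dyadicCutoff j)
    (fun J ζ => by
      rw [sum_dyadicCutoff, abs_of_nonneg (unitCutoff V).nonneg]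
      exact (unitCutoff V).le_one) tendsto_sum_dyadicCutoff
  exact ge_of_tendsto ((Complex.continuous_re.tendsto _).comp hlimit) (.of_forall hpartial)

end Summation

/-! ### Iterated directional derivatives -/

section DirDeriv

variable {W W' G : Type*} [NormedAddCommGroup W] [NormedSpace ℝ W] [NormedAddCommGroup W']
  [NormedSpace ℝ W'] [NormedAddCommGroup G] [NormedSpace ℝ G]

/-- The iterated directional derivative along a list of directions, the last one being taken
first. -/
noncomputable def dirDeriv : List W → (W → G) → W → G
  | [], F => F
  | v :: l, F => fun X => fderiv ℝ (dirDeriv l F) X v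

lemma contDiff_dirDeriv (l : List W) {F : W → G} (hF : ContDiff ℝ ∞ F) :
    ContDiff ℝ ∞ (dirDeriv l F) := by
  induction l with
  | nil => exact hF
  | cons v l ih => exact (ih.fderiv_right (m := ∞) (by simp)).clm_apply contDiff_const

lemma dirDeriv_append (l l' : List W) (F : W → G) :
    dirDeriv (l ++ l') F = dirDeriv l (dirDeriv l' F) := by
  induction l with
  | nil => rfl
  | cons v l ih => simp only [List.cons_append, dirDeriv, ih]

lemma dirDeriv_perm {l l' : List W} (h : l.Perm l') {F : W → G} (hF : ContDiff ℝ ∞ F) :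
    dirDeriv l F = dirDeriv l' F := by
  induction h with
  | nil => rfl
  | cons v _ ih => simp only [dirDeriv, ih]
  | swap v w l =>
    ext X
    have hl := contDiff_dirDeriv l hF
    have hdiff : DifferentiableAt ℝ (fderiv ℝ (dirDeriv l F)) X :=
      (hl.fderiv_right (m := ∞) (by simp)).differentiable (by simp) X
    have hsymm : IsSymmSndFDerivAt ℝ (dirDeriv l F) X :=
      hl.contDiffAt.isSymmSndFDerivAt
        (by simpa using WithTop.coe_le_coe.2 (le_top : (2 : ℕ∞) ≤ ⊤))
    simp only [dirDeriv]
    rw [fderiv_clm_apply hdiff (differentiableAt_const _),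
      fderiv_clm_apply hdiff (differentiableAt_const _)]
    simpa using hsymm.eq w v
  | trans _ _ ih₁ ih₂ => exact ih₁.trans ih₂

lemma iteratedFDeriv_apply_eq_dirDeriv {k : ℕ} {F : W → G} (hF : ContDiff ℝ ∞ F) (v : Fin k → W)
    (X : W) : iteratedFDeriv ℝ k F X v = dirDeriv (List.ofFn v) F X := by
  induction k generalizing X with
  | zero => simp [dirDeriv]
  | succ k ih =>
    have htail : dirDeriv (List.ofFn fun i : Fin k => v i.succ) F =
        fun X => iteratedFDeriv ℝ k F X (Fin.tail v) := funext fun Y => (ih (Fin.tail v) Y).symm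
    have hdiff : DifferentiableAt ℝ (iteratedFDeriv ℝ k F) X :=
      hF.differentiable_iteratedFDeriv (by exact_mod_cast ENat.natCast_lt_top k) X
    simp only [iteratedFDeriv_succ_apply_left, List.ofFn_succ, dirDeriv, htail,
      fderiv_continuousMultilinear_apply_const_apply hdiff]

lemma dirDeriv_comp_affine (L : W →L[ℝ] W') (c : W') (l : List W) {F : W' → G}
    (hF : ContDiff ℝ ∞ F) (X : W) :
    dirDeriv l (fun X => F (c + L X)) X = dirDeriv (l.map L) F (c + L X) := by
  induction l generalizing X with
  | nil => rfl
  | cons v l ih =>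
    have hdiff := (contDiff_dirDeriv (l.map L) hF).differentiable (by simp) (c + L X)
    have hchain := (hdiff.hasFDerivAt.comp X (L.hasFDerivAt.const_add c)).fderiv
    simp only [Function.comp_def] at hchain
    simp only [List.map_cons, dirDeriv, funext ih, hchain, ContinuousLinearMap.comp_apply]

lemma iteratedFDeriv_comp_affine_apply (L : W →L[ℝ] W') (c : W') {F : W' → G}
    (hF : ContDiff ℝ ∞ F) {k : ℕ} (X : W) (Y : Fin k → W) :
    iteratedFDeriv ℝ k (fun X => F (c + L X)) X Y =
      iteratedFDeriv ℝ k F (c + L X) fun i => L (Y i) := by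
  have hcomp : ContDiff ℝ ∞ fun X => F (c + L X) := hF.comp (contDiff_const.add L.contDiff)
  rw [iteratedFDeriv_apply_eq_dirDeriv hcomp, dirDeriv_comp_affine L c _ hF,
    iteratedFDeriv_apply_eq_dirDeriv hF, List.map_ofFn]
  rfl

lemma norm_multilinear_apply_le_of_basis {ι : Type*} [Fintype ι] (b : Basis ι ℝ W) {k : ℕ}
    (M : ContinuousMultilinearMap ℝ (fun _ : Fin k => W) G) {B : ℝ} {w : ι → ℝ}
    (hM : ∀ r : Fin k → ι, ‖M fun i => b (r i)‖ ≤ B * ∏ i, w (r i)) (Y : Fin k → W) :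
    ‖M Y‖ ≤ B * ∏ i, ∑ c, |b.repr (Y i) c| * w c := by
  classical
  have hexpand : M Y = ∑ r : Fin k → ι, (∏ i, b.repr (Y i) (r i)) • M fun i => b (r i) := by
    conv_lhs => rw [← funext fun i => b.sum_repr (Y i), M.map_sum]
    exact Finset.sum_congr rfl fun r _ => M.map_smul_univ _ _
  calc ‖M Y‖ ≤ ∑ r : Fin k → ι, (∏ i, |b.repr (Y i) (r i)|) * (B * ∏ i, w (r i)) := by
        rw [hexpand]
        refine norm_sum_le_of_le _ fun r _ => ?_
        rw [norm_smul, norm_prod]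
        exact mul_le_mul_of_nonneg_left (hM r) (by positivity)
    _ = B * ∏ i, ∑ c, |b.repr (Y i) c| * w c := by
        rw [Finset.prod_univ_sum, Finset.mul_sum, Fintype.piFinset_univ]
        refine Finset.sum_congr rfl fun r _ => ?_
        rw [Finset.prod_mul_distrib]
        ring

end DirDeriv

/-! ### Multi-index derivatives -/

section MultiIndex

variable {n : ℕ}

/-- The list of coordinates in which each `i` occurs `α i` times. -/
def coordList (α : Fin n → ℕ) : List (Fin n) :=
  (List.finRange n).flatMap fun i => List.replicate (α i) i

lemma count_coordList (α : Fin n → ℕ) (i : Fin n) : (coordList α).count i = α i := by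
  have hif : (fun j => if j = i then α j else 0) = fun j => if j = i then α i else 0 := by
    ext j
    split_ifs with h <;> simp [h]
  rw [coordList, List.count_flatMap]
  simp only [Function.comp_def, List.count_replicate, beq_iff_eq]
  rw [hif, ← Fin.sum_univ_def]
  simp

lemma length_coordList (α : Fin n → ℕ) : ((coordList α).length : ℝ) = mOrd α := by
  simp only [coordList, mOrd, List.length_flatMap, List.length_replicate]
  rw [← Fin.sum_univ_def, Nat.cast_sum]

lemma exists_perm_coordList_append (l : List (Fin n ⊕ Fin n)) :
    ∃ β α : Fin n → ℕ, l.Perm ((coordList β).map .inl ++ (coordList α).map .inr) := by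
  -- The derived `BEq` instance on `Sum` has no `LawfulBEq` instance.
  let _ : BEq (Fin n ⊕ Fin n) := instBEqOfDecidableEq
  refine ⟨fun i => l.count (.inl i), fun i => l.count (.inr i), List.perm_iff_count.2 ?_⟩
  rintro (i | i)
  · rw [List.count_append, List.count_map_of_injective _ _ Sum.inl_injective, count_coordList,
      List.count_eq_zero_of_not_mem (l := List.map _ _) (by simp), add_zero]
  · rw [List.count_append, List.count_map_of_injective _ _ Sum.inr_injective, count_coordList,
      List.count_eq_zero_of_not_mem (l := List.map Sum.inl _) (by simp), zero_add]

lemma iterate_pd_eq_dirDeriv (i : Fin n) (k : ℕ) (F : (Fin n → ℝ) → ℂ) :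
    (pd i)^[k] F = dirDeriv (List.replicate k (Pi.basisFun ℝ (Fin n) i)) F := by
  induction k with
  | zero => rfl
  | succ k ih =>
    rw [Function.iterate_succ_apply', ih, Pi.basisFun_apply]
    rfl

lemma md_eq_dirDeriv (α : Fin n → ℕ) (F : (Fin n → ℝ) → ℂ) :
    md α F = dirDeriv ((coordList α).map (Pi.basisFun ℝ (Fin n))) F := by
  unfold md coordList
  generalize List.finRange n = l
  induction l with
  | nil => rfl
  | cons i l ih =>
    simp only [List.map_cons, List.foldr_cons, Function.comp_apply, List.flatMap_cons,
      List.map_append, dirDeriv_append]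
    rw [ih, iterate_pd_eq_dirDeriv, List.map_replicate]

/-- The standard basis of `ℝⁿ × ℝⁿ`, positions on the left and frequencies on the right. -/
noncomputable abbrev phaseBasis (n : ℕ) :
    Basis (Fin n ⊕ Fin n) ℝ ((Fin n → ℝ) × (Fin n → ℝ)) :=
  (Pi.basisFun ℝ (Fin n)).prod (Pi.basisFun ℝ (Fin n))

lemma map_phaseBasis_inl (l : List (Fin n)) :
    (l.map Sum.inl).map (phaseBasis n) =
      (l.map (Pi.basisFun ℝ (Fin n))).map (ContinuousLinearMap.inl ℝ (Fin n → ℝ) (Fin n → ℝ)) := by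
  simp [Function.comp_def]

lemma map_phaseBasis_inr (l : List (Fin n)) :
    (l.map Sum.inr).map (phaseBasis n) =
      (l.map (Pi.basisFun ℝ (Fin n))).map (ContinuousLinearMap.inr ℝ (Fin n → ℝ) (Fin n → ℝ)) := by
  simp [Function.comp_def]

lemma mixedD_eq_dirDeriv (β α : Fin n → ℕ) {σ : (Fin n → ℝ) → (Fin n → ℝ) → ℂ}
    (hσ : ContDiff ℝ ∞ fun p : (Fin n → ℝ) × (Fin n → ℝ) => σ p.1 p.2)
    (X : (Fin n → ℝ) × (Fin n → ℝ)) :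
    mixedD β α σ X.1 X.2 =
      dirDeriv (((coordList β).map Sum.inl ++ (coordList α).map Sum.inr).map (phaseBasis n))
        (fun p => σ p.1 p.2) X := by
  have hfreq (x ξ : Fin n → ℝ) : md α (fun ξ' => σ x ξ') ξ =
      dirDeriv (((coordList α).map Sum.inr).map (phaseBasis n)) (fun p => σ p.1 p.2) (x, ξ) := by
    have h := dirDeriv_comp_affine (.inr ℝ (Fin n → ℝ) (Fin n → ℝ)) (x, 0)
      ((coordList α).map (Pi.basisFun ℝ (Fin n))) hσ ξ
    rw [md_eq_dirDeriv, map_phaseBasis_inr]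
    simpa using h
  have hpos := dirDeriv_comp_affine (.inl ℝ (Fin n → ℝ) (Fin n → ℝ)) (0, X.2)
    ((coordList β).map (Pi.basisFun ℝ (Fin n)))
    (contDiff_dirDeriv (((coordList α).map Sum.inr).map (phaseBasis n)) hσ) X.1
  simp only [ContinuousLinearMap.inl_apply, Prod.mk_add_mk, add_zero, zero_add] at hpos
  rw [List.map_append, dirDeriv_append, map_phaseBasis_inl, ← hpos, ← md_eq_dirDeriv]
  simp only [mixedD, hfreq]

end MultiIndex

/-! ### Hörmander symbols -/

section HormanderSymbol

/-- The length of the phase space vector `Y` in Hörmander's metric of type `(ρ, δ)` at the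
frequency `ζ`. -/
noncomputable def phaseLength (ρ δ : ℝ) (ζ : V) (Y : V × V) : ℝ :=
  (1 + ‖ζ‖ ^ 2) ^ (δ / 2) * ‖Y.1‖ + (1 + ‖ζ‖ ^ 2) ^ (-ρ / 2) * ‖Y.2‖

/-- The Hörmander class `S^m_{ρ,δ}`, described without coordinates by measuring derivatives in
Hörmander's metric. -/
structure IsHormanderSymbol (m ρ δ : ℝ) (F : V × V → ℂ) : Prop where
  contDiff : ContDiff ℝ ∞ F
  norm_iteratedFDeriv_apply_le : ∀ k : ℕ, ∃ C : ℝ, 0 ≤ C ∧ ∀ (X : V × V) (Y : Fin k → V × V),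
    ‖iteratedFDeriv ℝ k F X Y‖ ≤
      C * (1 + ‖X.2‖ ^ 2) ^ (m / 2) * ∏ i, phaseLength ρ δ X.2 (Y i)

lemma phaseLength_nonneg {E : Type*} [NormedAddCommGroup E] (ρ δ : ℝ) (ζ : E) (Y : E × E) :
    0 ≤ phaseLength ρ δ ζ Y := by
  unfold phaseLength
  positivity

lemma InShell.rpow_half_le {E : Type*} [NormedAddCommGroup E] {T : ℝ} {ζ : E}
    (hζ : InShell 2 T ζ) (hT : 1 ≤ T) (s : ℝ) :
    (1 + ‖ζ‖ ^ 2) ^ (s / 2) ≤ 5 ^ |s / 2| * T ^ s := by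
  have hsq : (T ^ 2) ^ (s / 2) = T ^ s := by
    rw [← Real.rpow_natCast_mul (by linarith)]
    congr 1
    push_cast
    ring
  rw [← hsq]
  refine rpow_le_rpow_abs_mul_rpow (by positivity) (by norm_num) (by positivity) ?_ ?_ _
  · nlinarith [hζ.1, norm_nonneg ζ]
  · rcases hζ.2 with rfl | h <;> nlinarith [sq_nonneg ‖ζ‖]

lemma InShell.rpow_half_mul_rpow_le {E : Type*} [NormedAddCommGroup E] {T : ℝ} {ζ : E}
    (hζ : InShell 2 T ζ) (hT : 1 ≤ T) {s κ t : ℝ} (h : s + κ ≤ t) :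
    (1 + ‖ζ‖ ^ 2) ^ (s / 2) * T ^ κ ≤ 5 ^ |s / 2| * T ^ t :=
  calc (1 + ‖ζ‖ ^ 2) ^ (s / 2) * T ^ κ ≤ 5 ^ |s / 2| * T ^ s * T ^ κ := by
        gcongr
        exact hζ.rpow_half_le hT s
    _ = 5 ^ |s / 2| * T ^ (s + κ) := by rw [Real.rpow_add (by linarith), mul_assoc]
    _ ≤ 5 ^ |s / 2| * T ^ t := by gcongr

lemma isClosed_inShell {E : Type*} [NormedAddCommGroup E] (c T : ℝ) :
    IsClosed {ζ : E | InShell c T ζ} :=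
  (isClosed_le continuous_norm continuous_const).inter
    (isClosed_const.union (isClosed_le continuous_const (continuous_const.mul continuous_norm)))

/-- The linear part of the change of variables in `rescale`. -/
noncomputable def scaling (V : Type*) [NormedAddCommGroup V] [InnerProductSpace ℝ V] (R : ℝ) :
    V × V →L[ℝ] V × V :=
  (R⁻¹ • ContinuousLinearMap.fst ℝ V V).prod (R • ContinuousLinearMap.snd ℝ V V)

lemma rescale_eq_comp_scaling (R : ℝ) (z : V) (P : V × V → ℂ) :
    rescale R z P = fun Y => P ((0, z) + scaling V R Y) := by
  ext Y
  simp [rescale, scaling]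

variable {m ρ δ κ ε : ℝ}

lemma phaseLength_scaling_le {T : ℝ} {ζ : V} (hρ : ε ≤ ρ - κ) (hδ : ε ≤ κ - δ) (hT : 1 ≤ T)
    (hζ : InShell 2 T ζ) (Y : V × V) :
    phaseLength ρ δ ζ (scaling V (T ^ κ) Y) ≤
      (5 ^ |δ / 2| + 5 ^ |-ρ / 2|) * T ^ (-ε) * ‖Y‖ := by
  have hT0 : 0 < T := by linarith
  calc phaseLength ρ δ ζ (scaling V (T ^ κ) Y)
      = (1 + ‖ζ‖ ^ 2) ^ (δ / 2) * T ^ (-κ) * ‖Y.1‖ +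
        (1 + ‖ζ‖ ^ 2) ^ (-ρ / 2) * T ^ κ * ‖Y.2‖ := by
        have hR : 0 ≤ T ^ κ := by positivity
        simp [phaseLength, scaling, norm_smul, abs_of_nonneg hR, Real.rpow_neg hT0.le, mul_assoc]
    _ ≤ 5 ^ |δ / 2| * T ^ (-ε) * ‖Y‖ + 5 ^ |-ρ / 2| * T ^ (-ε) * ‖Y‖ := by
        refine add_le_add ?_ ?_
        · exact mul_le_mul (hζ.rpow_half_mul_rpow_le hT (by linarith)) (norm_fst_le Y)
            (norm_nonneg _) (by positivity)
        · exact mul_le_mul (hζ.rpow_half_mul_rpow_le hT (by linarith)) (norm_snd_le Y)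
            (norm_nonneg _) (by positivity)
    _ = _ := by ring

lemma IsHormanderSymbol.exists_norm_iteratedFDeriv_rescale_le {F : V × V → ℂ}
    (hF : IsHormanderSymbol m ρ δ F) (hρ : ε ≤ ρ - κ) (hδ : ε ≤ κ - δ) (k : ℕ) :
    ∃ C : ℝ, 0 ≤ C ∧ ∀ (T : ℝ) (z : V) (Y : V × V), 1 ≤ T → InShell 2 T (z + T ^ κ • Y.2) →
      ‖iteratedFDeriv ℝ k (rescale (T ^ κ) z F) Y‖ ≤ C * (T ^ m * (T ^ (-ε)) ^ k) := by
  obtain ⟨C, hC, hle⟩ := hF.norm_iteratedFDeriv_apply_le k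
  set B : ℝ := 5 ^ |δ / 2| + 5 ^ |-ρ / 2|
  refine ⟨C * 5 ^ |m / 2| * B ^ k, by positivity, fun T z Y hT hshell => ?_⟩
  set X : V × V := (0, z) + scaling V (T ^ κ) Y
  have hX : InShell 2 T X.2 := hshell
  rw [rescale_eq_comp_scaling]
  refine ContinuousMultilinearMap.opNorm_le_bound (by positivity) fun Z => ?_
  rw [iteratedFDeriv_comp_affine_apply _ _ hF.contDiff]
  calc ‖iteratedFDeriv ℝ k F X fun i => scaling V (T ^ κ) (Z i)‖
      ≤ C * (1 + ‖X.2‖ ^ 2) ^ (m / 2) * ∏ i, phaseLength ρ δ X.2 (scaling V (T ^ κ) (Z i)) :=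
        hle X _
    _ ≤ C * (5 ^ |m / 2| * T ^ m) * ∏ i, (B * T ^ (-ε) * ‖Z i‖) := by
        gcongr
        · exact Finset.prod_nonneg fun i _ => phaseLength_nonneg _ _ _ _
        · exact hX.rpow_half_le hT m
        · exact fun i _ => phaseLength_nonneg _ _ _ _
        · exact phaseLength_scaling_le hρ hδ hT hX _
    _ = _ := by
        rw [Finset.prod_mul_distrib, Finset.prod_const, Finset.card_univ, Fintype.card_fin, mul_pow]
        ring

lemma IsHormanderSymbol.contDiff_rescale {F : V × V → ℂ} (hF : IsHormanderSymbol m ρ δ F)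
    (R : ℝ) (z : V) : ContDiff ℝ ∞ (rescale R z F) := by
  rw [rescale_eq_comp_scaling]
  exact hF.contDiff.comp (contDiff_const.add (scaling V R).contDiff)

lemma norm_iteratedFDeriv_mul_le_of_le {W : Type*} [NormedAddCommGroup W] [NormedSpace ℝ W]
    {f g : W → ℂ} (hf : ContDiff ℝ ∞ f) (hg : ContDiff ℝ ∞ g) {C D : ℕ → ℝ} {a q : ℝ} {Y : W}
    (hC : ∀ i, ‖iteratedFDeriv ℝ i f Y‖ ≤ C i * (a * q ^ i))
    (hD : ∀ i, ‖iteratedFDeriv ℝ i g Y‖ ≤ D i * q ^ i) (k : ℕ) :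
    ‖iteratedFDeriv ℝ k (fun Y => f Y * g Y) Y‖ ≤
      (∑ i ∈ Finset.range (k + 1), k.choose i * C i * D (k - i)) * (a * q ^ k) := by
  refine (norm_iteratedFDeriv_mul_le (N := ∞) hf hg Y (WithTop.coe_le_coe.2 le_top)).trans ?_
  rw [Finset.sum_mul]
  refine Finset.sum_le_sum fun i hi => ?_
  have hq : q ^ k = q ^ i * q ^ (k - i) := by
    rw [← pow_add, Nat.add_sub_cancel' (Nat.lt_succ_iff.1 (Finset.mem_range.1 hi))]
  have hCi := (norm_nonneg _).trans (hC i)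
  calc (k.choose i : ℝ) * ‖iteratedFDeriv ℝ i f Y‖ * ‖iteratedFDeriv ℝ (k - i) g Y‖
      ≤ k.choose i * (C i * (a * q ^ i)) * (D (k - i) * q ^ (k - i)) := by
        gcongr
        exacts [hC i, hD _]
    _ = _ := by rw [hq]; ring

end HormanderSymbol

section DyadicPiece

lemma rescale_dyadicCutoff (j : ℕ) (R : ℝ) (z : V) :
    (rescale R z fun X : V × V => (dyadicCutoff j X.2 : ℂ)) =
      fun Y => (dyadicProfile j
        (((2 : ℝ) ^ j)⁻¹ • z + ((R / 2 ^ j) • ContinuousLinearMap.snd ℝ V V) Y) : ℂ) := by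
  ext Y
  simp [rescale, dyadicCutoff, smul_smul, div_eq_inv_mul]

lemma contDiff_ofReal_dyadicProfile (j : ℕ) :
    ContDiff ℝ ∞ fun u : V => (dyadicProfile j u : ℂ) :=
  Complex.ofRealCLM.contDiff.comp (contDiff_dyadicProfile j)

lemma contDiff_rescale_dyadicCutoff (j : ℕ) (R : ℝ) (z : V) :
    ContDiff ℝ ∞ (rescale R z fun X : V × V => (dyadicCutoff j X.2 : ℂ)) := by
  rw [rescale_dyadicCutoff]
  exact (contDiff_ofReal_dyadicProfile j).comp
    (contDiff_const.add (ContinuousLinearMap.contDiff _))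

lemma norm_iteratedFDeriv_rescale_dyadicCutoff_le {k : ℕ} {D : ℝ}
    (hD : ∀ (j : ℕ) (u : V), ‖iteratedFDeriv ℝ k (fun u : V => (dyadicProfile j u : ℂ)) u‖ ≤ D)
    (j : ℕ) (z : V) {R : ℝ} (hR : 0 ≤ R) (Y : V × V) :
    ‖iteratedFDeriv ℝ k (rescale R z fun X : V × V => (dyadicCutoff j X.2 : ℂ)) Y‖ ≤
      D * (R / 2 ^ j) ^ k := by
  have hD0 : 0 ≤ D := (norm_nonneg _).trans (hD 0 0)
  rw [rescale_dyadicCutoff]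
  refine ContinuousMultilinearMap.opNorm_le_bound (by positivity) fun Z => ?_
  rw [iteratedFDeriv_comp_affine_apply _ _ (contDiff_ofReal_dyadicProfile j)]
  calc _ ≤ D * ∏ i, ‖((R / 2 ^ j) • ContinuousLinearMap.snd ℝ V V) (Z i)‖ :=
        (ContinuousMultilinearMap.le_opNorm _ _).trans (by gcongr; exact hD j _)
    _ ≤ D * ∏ i, (R / 2 ^ j * ‖Z i‖) := by
        gcongr with i
        rw [smul_apply, norm_smul, Real.norm_of_nonneg (by positivity)]
        gcongr
        exact norm_snd_le _
    _ = _ := by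
        rw [Finset.prod_mul_distrib, Finset.prod_const, Finset.card_univ, Fintype.card_fin]
        ring

variable [FiniteDimensional ℝ V] {m ρ δ κ ε : ℝ}

lemma exists_norm_iteratedFDeriv_dyadicProfile_le (V : Type*) [NormedAddCommGroup V]
    [InnerProductSpace ℝ V] [FiniteDimensional ℝ V] (k : ℕ) : ∃ D : ℝ, 0 ≤ D ∧ ∀ (j : ℕ) (u : V),
      ‖iteratedFDeriv ℝ k (fun u : V => (dyadicProfile j u : ℂ)) u‖ ≤ D := by
  have heach (j : ℕ) : ∃ D : ℝ, ∀ u : V,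
      ‖iteratedFDeriv ℝ k (fun u : V => (dyadicProfile j u : ℂ)) u‖ ≤ D := by
    have hsupp : HasCompactSupport fun u : V => (dyadicProfile j u : ℂ) :=
      .intro (isCompact_closedBall (0 : V) 2) fun u hu => by
        have hu2 : 2 < ‖u‖ := by simpa using hu
        rw [dyadicProfile_eq_zero_of_two_le j hu2.le, Complex.ofReal_zero]
    exact (hsupp.iteratedFDeriv (𝕜 := ℝ) k).exists_bound_of_continuous
      ((contDiff_ofReal_dyadicProfile j).continuous_iteratedFDeriv (WithTop.coe_le_coe.2 le_top))
  obtain ⟨D₀, hD₀⟩ := heach 0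
  obtain ⟨D₁, hD₁⟩ := heach 1
  refine ⟨max D₀ D₁, (norm_nonneg _).trans ((hD₀ 0).trans (le_max_left _ _)), fun j u => ?_⟩
  cases j with
  | zero => exact (hD₀ u).trans (le_max_left _ _)
  | succ j => exact (hD₁ u).trans (le_max_right _ _)

lemma IsHormanderSymbol.exists_norm_iteratedFDeriv_rescale_mul_dyadicCutoff_le {F : V × V → ℂ}
    (hF : IsHormanderSymbol m ρ δ F) (hρ : ε ≤ ρ - κ) (hδ : ε ≤ κ - δ) (hκ : ε ≤ 1 - κ) :
    ∃ A : ℕ → ℝ, (∀ k, 0 ≤ A k) ∧ ∀ (j k : ℕ) (z : V) (Y : V × V),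
      ‖iteratedFDeriv ℝ k (rescale (((2 : ℝ) ^ j) ^ κ) z fun X => F X * (dyadicCutoff j X.2 : ℂ)) Y‖
        ≤ A k * (((2 : ℝ) ^ j) ^ m * (((2 : ℝ) ^ j) ^ (-ε)) ^ k) := by
  choose C hC hFle using hF.exists_norm_iteratedFDeriv_rescale_le hρ hδ
  choose D hD hcut using exists_norm_iteratedFDeriv_dyadicProfile_le V
  have hA (k : ℕ) : 0 ≤ ∑ i ∈ Finset.range (k + 1), k.choose i * C i * D (k - i) :=
    Finset.sum_nonneg fun i _ => mul_nonneg (mul_nonneg (Nat.cast_nonneg _) (hC i)) (hD _)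
  refine ⟨_, hA, fun j k z Y => ?_⟩
  set T : ℝ := 2 ^ j
  have hT1 : 1 ≤ T := one_le_pow₀ one_le_two
  have hT0 : 0 < T := by positivity
  by_cases hshell : InShell 2 T (z + T ^ κ • Y.2)
  · refine norm_iteratedFDeriv_mul_le_of_le (hF.contDiff_rescale _ z)
      (contDiff_rescale_dyadicCutoff j _ z) (fun i => hFle i T z Y hT1 hshell) (fun i => ?_) k
    refine (norm_iteratedFDeriv_rescale_dyadicCutoff_le (hcut i) j z (by positivity) Y).trans ?_
    have hgain : T ^ κ / T ≤ T ^ (-ε) := by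
      rw [← Real.rpow_sub_one hT0.ne']
      exact Real.rpow_le_rpow_of_exponent_le hT1 (by linarith)
    gcongr
    exact hD i
  · have hzero : iteratedFDeriv ℝ k
        (rescale (T ^ κ) z fun X => F X * (dyadicCutoff j X.2 : ℂ)) Y = 0 := by
      by_contra hne
      refine hshell (closure_minimal ?_ ((isClosed_inShell 2 T).preimage (f := fun Y : V × V =>
        z + T ^ κ • Y.2) (by fun_prop)) (support_iteratedFDeriv_subset (𝕜 := ℝ) k hne))
      exact fun Z hZ => inShell_of_dyadicCutoff_ne_zero fun h => hZ (by simp [rescale, h])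
    rw [hzero, norm_zero]
    exact mul_nonneg (hA k) (by positivity)

theorem IsHormanderSymbol.exists_isShellSymbol {F : V × V → ℝ}
    (hF : IsHormanderSymbol m ρ δ fun X => (F X : ℂ)) (hpos : ∀ X, 0 ≤ F X) (hε : 0 ≤ ε)
    (hρ : ε ≤ ρ - κ) (hδ : ε ≤ κ - δ) (hκ : ε ≤ 1 - κ) :
    ∃ A : ℕ → ℝ, ∀ j : ℕ, IsShellSymbol A (((2 : ℝ) ^ j) ^ (m - ε)) κ (2 ^ j)
      fun X => F X * dyadicCutoff j X.2 := by
  obtain ⟨A, hA, hle⟩ := hF.exists_norm_iteratedFDeriv_rescale_mul_dyadicCutoff_le hρ hδ hκ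
  refine ⟨A, fun j => ⟨fun X => mul_nonneg (hpos X) (dyadicCutoff_nonneg j _),
    fun X hX => inShell_of_dyadicCutoff_ne_zero (right_ne_zero_of_mul hX), fun z => ?_⟩⟩
  simp only [Complex.ofReal_mul]
  set T : ℝ := 2 ^ j
  have hT1 : 1 ≤ T := one_le_pow₀ one_le_two
  refine ⟨(hF.contDiff_rescale _ z).mul (contDiff_rescale_dyadicCutoff j _ z), ⟨A 0 * T ^ m,
    fun Y => by simpa using hle j 0 z Y⟩, fun k hk Y => (hle j k z Y).trans ?_⟩
  have hgain : (T ^ (-ε)) ^ k ≤ T ^ (-ε) :=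
    pow_le_of_le_one (by positivity) (Real.rpow_le_one_of_one_le_of_nonpos hT1 (by linarith))
      (by omega)
  calc A k * (T ^ m * (T ^ (-ε)) ^ k) ≤ A k * (T ^ m * T ^ (-ε)) := by
        gcongr
        exact hA k
    _ = T ^ (m - ε) * A k := by
        rw [← Real.rpow_add (by linarith), ← sub_eq_add_neg, mul_comm]

end DyadicPiece

/-! ### The Gårding inequality -/

section Interpolation

lemma exists_mul_rpow_le_add_rpow {r s η : ℝ} (hrs : r < s) (hη : 0 < η) (s' C : ℝ) (hC : 0 ≤ C) :
    ∃ C' > 0, ∀ B : ℝ, 1 ≤ B → C * B ^ r ≤ η * B ^ s + C' * B ^ s' := by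
  have hsmall : ∀ᶠ B : ℝ in Filter.atTop, C * B ^ (-(s - r)) ≤ η := by
    have hlim := (tendsto_rpow_neg_atTop (sub_pos.2 hrs)).const_mul C
    rw [mul_zero] at hlim
    exact hlim.eventually_le_const hη
  obtain ⟨B₀, hB₀⟩ := Filter.eventually_atTop.1 ((Filter.eventually_ge_atTop 1).and hsmall)
  have hB₀pos : 0 < B₀ := one_pos.trans_le (hB₀ B₀ le_rfl).1
  refine ⟨C * B₀ ^ |r - s'| + 1, by positivity, fun B hB => ?_⟩
  have hBpos : 0 < B := one_pos.trans_le hB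
  rcases le_total B₀ B with hlarge | hlow
  · calc C * B ^ r = C * B ^ (-(s - r)) * B ^ s := by
          rw [mul_assoc, ← Real.rpow_add hBpos]; ring_nf
      _ ≤ η * B ^ s := by gcongr; exact (hB₀ B hlarge).2
      _ ≤ _ := le_add_of_nonneg_right (by positivity)
  · have hpow : B ^ (r - s') ≤ B₀ ^ |r - s'| :=
      (Real.rpow_le_rpow_of_exponent_le hB (le_abs_self _)).trans
        (Real.rpow_le_rpow hBpos.le hlow (abs_nonneg _))
    calc C * B ^ r = C * B ^ (r - s') * B ^ s' := by
          rw [mul_assoc, ← Real.rpow_add hBpos, sub_add_cancel]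
      _ ≤ (C * B₀ ^ |r - s'| + 1) * B ^ s' := by
          gcongr
          exact (mul_le_mul_of_nonneg_left hpow hC).trans (le_add_of_nonneg_right one_pos.le)
      _ ≤ _ := le_add_of_nonneg_left (by positivity)

variable [FiniteDimensional ℝ V] [MeasurableSpace V] [BorelSpace V]

lemma exists_mul_sobolevEnergy_le_add {r s η : ℝ} (hrs : r < s) (hη : 0 < η) (s' C : ℝ)
    (hC : 0 ≤ C) :
    ∃ C' > 0, ∀ g : 𝓢(V, ℂ),
      C * sobolevEnergy r g ≤ η * sobolevEnergy s g + C' * sobolevEnergy s' g := by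
  obtain ⟨C', hC', hle⟩ := exists_mul_rpow_le_add_rpow hrs hη s' C hC
  refine ⟨C', hC', fun g => ?_⟩
  have h_int (t c : ℝ) : Integrable fun ζ => c * ((1 + ‖ζ‖ ^ 2) ^ t * ‖g ζ‖ ^ 2) :=
    (integrable_sobolevEnergy t g).const_mul c
  simp only [sobolevEnergy, ← integral_const_mul]
  rw [← integral_add (h_int _ _) (h_int _ _)]
  refine integral_mono (h_int _ _) ((h_int _ _).add (h_int _ _)) fun ζ => ?_
  have hB := mul_le_mul_of_nonneg_right (hle (1 + ‖ζ‖ ^ 2) (by nlinarith [sq_nonneg ‖ζ‖]))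
    (sq_nonneg ‖g ζ‖)
  simp only
  linarith

end Interpolation

section Inequality

variable {m ρ δ : ℝ}

lemma exists_intermediate_scale (hρ : 0 < ρ) (hδ : δ < 1) (hδρ : δ < ρ) :
    ∃ κ ε : ℝ, 0 ≤ κ ∧ κ < 1 ∧ 0 < ε ∧ ε ≤ ρ - κ ∧ ε ≤ κ - δ ∧ ε ≤ 1 - κ := by
  obtain ⟨κ, hκl, hκr⟩ := exists_between (max_lt (lt_min hδρ hδ) (lt_min hρ one_pos))
  obtain ⟨hδκ, h0κ⟩ := max_lt_iff.1 hκl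
  obtain ⟨hκρ, hκ1⟩ := lt_min_iff.1 hκr
  exact ⟨κ, min (ρ - κ) (min (κ - δ) (1 - κ)), h0κ.le, hκ1,
    lt_min (sub_pos.2 hκρ) (lt_min (sub_pos.2 hδκ) (sub_pos.2 hκ1)), min_le_left _ _,
    (min_le_right _ _).trans (min_le_left _ _), (min_le_right _ _).trans (min_le_right _ _)⟩

lemma IsHormanderSymbol.exists_norm_le {F : V × V → ℂ} (hF : IsHormanderSymbol m ρ δ F) :
    ∃ C : ℝ, ∀ X, ‖F X‖ ≤ C * (1 + ‖X.2‖ ^ 2) ^ (m / 2) := by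
  obtain ⟨C, -, hC⟩ := hF.norm_iteratedFDeriv_apply_le 0
  exact ⟨C, fun X => by simpa using hC X 0⟩

variable [FiniteDimensional ℝ V] [MeasurableSpace V] [BorelSpace V]

theorem IsHormanderSymbol.garding {F : V × V → ℝ}
    (hF : IsHormanderSymbol m ρ δ fun X => (F X : ℂ))
    (hpos : ∀ X, 0 ≤ F X) (hρ : 0 < ρ) (hδ : δ < 1) (hδρ : δ < ρ) {s η : ℝ} (hs : m / 2 ≤ s)
    (hη : 0 < η) (s' : ℝ) :
    ∃ C > 0, ∀ f : 𝓢(V, ℂ), -η * sobolevEnergy s ⇑(𝓕 f : 𝓢(V, ℂ)) -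
        C * sobolevEnergy s' ⇑(𝓕 f : 𝓢(V, ℂ)) ≤
      (knForm (fun X => (F X : ℂ)) ⇑(𝓕 f : 𝓢(V, ℂ)) f).re := by
  obtain ⟨κ, ε, hκ0, hκ1, hε, hερ, hεδ, hεκ⟩ := exists_intermediate_scale hρ hδ hδρ
  obtain ⟨A, hA⟩ := hF.exists_isShellSymbol hpos hε.le hερ hεδ hεκ
  obtain ⟨M, hM⟩ := hF.exists_norm_le
  have hcont : Continuous F := Complex.continuous_re.comp hF.contDiff.continuous
  obtain ⟨C, hC, hlower⟩ := exists_neg_le_re_knForm (s := (m - ε / 2) / 2) hκ0 hκ1 (by linarith)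
    hcont (fun X => by simpa using hM X) hA
  obtain ⟨C', hC', hinterp⟩ := exists_mul_sobolevEnergy_le_add (V := V) (r := (m - ε / 2) / 2)
    (s := s) (by linarith) hη s' C hC
  exact ⟨C', hC', fun f => by linarith [hlower f, hinterp (𝓕 f)]⟩

end Inequality

/-! ### Coordinates -/

section Coordinates

variable {n : ℕ} {m ρ δ : ℝ} {σ : (Fin n → ℝ) → (Fin n → ℝ) → ℂ}

lemma wt_pos (ξ : Fin n → ℝ) : 0 < wt ξ := by
  unfold wt
  positivity

lemma wt_ofLp (ζ : EuclideanSpace ℝ (Fin n)) : wt ζ.ofLp = 1 + ‖ζ‖ ^ 2 := by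
  simp [wt, EuclideanSpace.norm_sq_eq]

/-- The factor that a derivative in the direction of a vector of `phaseBasis n` contributes to
the bounds defining `SymbolClass`. -/
noncomputable def coordWeight (ρ δ : ℝ) (ξ : Fin n → ℝ) : Fin n ⊕ Fin n → ℝ :=
  Sum.elim (fun _ => wt ξ ^ (δ / 2)) fun _ => wt ξ ^ (-ρ / 2)

lemma coordWeight_nonneg (ρ δ : ℝ) (ξ : Fin n → ℝ) (c : Fin n ⊕ Fin n) :
    0 ≤ coordWeight ρ δ ξ c := by
  rcases c with _ | _ <;> exact Real.rpow_nonneg (wt_pos ξ).le _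

lemma prod_map_coordWeight (ρ δ : ℝ) (ξ : Fin n → ℝ) (β α : Fin n → ℕ) :
    (((coordList β).map Sum.inl ++ (coordList α).map Sum.inr).map (coordWeight ρ δ ξ)).prod =
      wt ξ ^ ((-ρ * mOrd α + δ * mOrd β) / 2) := by
  have hpos := wt_pos ξ
  simp only [List.map_append, List.map_map, List.prod_append, Function.comp_def, coordWeight,
    Sum.elim_inl, Sum.elim_inr, List.map_const', List.prod_replicate,
    ← Real.rpow_mul_natCast hpos.le, length_coordList]
  rw [← Real.rpow_add hpos]
  ring_nf

lemma exists_norm_iteratedFDeriv_phaseBasis_le (hσ : SymbolClass m ρ δ σ) (k : ℕ) :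
    ∃ C : ℝ, 0 ≤ C ∧ ∀ (X : (Fin n → ℝ) × (Fin n → ℝ)) (r : Fin k → Fin n ⊕ Fin n),
      ‖iteratedFDeriv ℝ k (fun p : (Fin n → ℝ) × (Fin n → ℝ) => σ p.1 p.2) X
          fun i => phaseBasis n (r i)‖ ≤
        C * wt X.2 ^ (m / 2) * ∏ i, coordWeight ρ δ X.2 (r i) := by
  have hsmooth : ContDiff ℝ ∞ fun p : (Fin n → ℝ) × (Fin n → ℝ) => σ p.1 p.2 := hσ.1
  have hfixed (r : Fin k → Fin n ⊕ Fin n) : ∃ C : ℝ, 0 ≤ C ∧ ∀ X : (Fin n → ℝ) × (Fin n → ℝ),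
      ‖iteratedFDeriv ℝ k (fun p : (Fin n → ℝ) × (Fin n → ℝ) => σ p.1 p.2) X
          fun i => phaseBasis n (r i)‖ ≤
        C * wt X.2 ^ (m / 2) * ∏ i, coordWeight ρ δ X.2 (r i) := by
    obtain ⟨β, α, hperm⟩ := exists_perm_coordList_append (List.ofFn r)
    obtain ⟨C, hC, hle⟩ := hσ.2 α β
    refine ⟨C, hC.le, fun X => ?_⟩
    have hlist : (List.ofFn fun i => phaseBasis n (r i)) = (List.ofFn r).map (phaseBasis n) := by
      rw [List.map_ofFn, Function.comp_def]
    have hweight : ∏ i, coordWeight ρ δ X.2 (r i) =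
        wt X.2 ^ ((-ρ * mOrd α + δ * mOrd β) / 2) := by
      rw [← prod_map_coordWeight, ← (hperm.map _).prod_eq, List.map_ofFn, List.prod_ofFn,
        Function.comp_def]
    rw [iteratedFDeriv_apply_eq_dirDeriv hsmooth, hlist, dirDeriv_perm (hperm.map _) hsmooth,
      ← mixedD_eq_dirDeriv β α hsmooth, hweight, mul_assoc, ← Real.rpow_add (wt_pos _)]
    convert hle X.1 X.2 using 3
    ring
  choose C hC hle using hfixed
  refine ⟨∑ r, C r, Finset.sum_nonneg fun r _ => hC r, fun X r => (hle r X).trans ?_⟩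
  have hwt := Real.rpow_nonneg (wt_pos X.2).le (m / 2)
  gcongr
  · exact Finset.prod_nonneg fun i _ => coordWeight_nonneg _ _ _ _
  · exact Finset.single_le_sum (f := C) (fun r _ => hC r) (Finset.mem_univ r)

/-- The identification of the phase space over `EuclideanSpace ℝ (Fin n)` with `ℝⁿ × ℝⁿ`. -/
noncomputable abbrev phaseCoords (n : ℕ) :
    (EuclideanSpace ℝ (Fin n) × EuclideanSpace ℝ (Fin n)) ≃L[ℝ] (Fin n → ℝ) × (Fin n → ℝ) :=
  (EuclideanSpace.equiv (Fin n) ℝ).prodCongr (EuclideanSpace.equiv (Fin n) ℝ)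

lemma sum_abs_repr_mul_coordWeight_le (ρ δ : ℝ) (ζ : EuclideanSpace ℝ (Fin n))
    (Y : EuclideanSpace ℝ (Fin n) × EuclideanSpace ℝ (Fin n)) :
    ∑ c, |(phaseBasis n).repr (phaseCoords n Y) c| * coordWeight ρ δ ζ.ofLp c ≤
      n * phaseLength ρ δ ζ Y := by
  have hcoord (y : EuclideanSpace ℝ (Fin n)) (t : ℝ) :
      ∑ i, |y i| * (1 + ‖ζ‖ ^ 2) ^ t ≤ n * ((1 + ‖ζ‖ ^ 2) ^ t * ‖y‖) := by
    calc ∑ i, |y i| * (1 + ‖ζ‖ ^ 2) ^ t ≤ ∑ _i : Fin n, ‖y‖ * (1 + ‖ζ‖ ^ 2) ^ t := by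
          gcongr with i
          exact PiLp.norm_apply_le y i
      _ = _ := by
          rw [Finset.sum_const, Finset.card_univ, Fintype.card_fin, nsmul_eq_mul, mul_comm ‖y‖]
  rw [Fintype.sum_sum_type, phaseLength, mul_add]
  simp only [coordWeight, wt_ofLp, Sum.elim_inl, Sum.elim_inr]
  exact add_le_add (by simpa using hcoord Y.1 (δ / 2)) (by simpa using hcoord Y.2 (-ρ / 2))

lemma isHormanderSymbol_of_symbolClass (hσ : SymbolClass m ρ δ σ) :
    IsHormanderSymbol m ρ δ fun X : EuclideanSpace ℝ (Fin n) × EuclideanSpace ℝ (Fin n) =>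
      σ X.1.ofLp X.2.ofLp := by
  have hsmooth : ContDiff ℝ ∞ fun p : (Fin n → ℝ) × (Fin n → ℝ) => σ p.1 p.2 := hσ.1
  refine ⟨hsmooth.comp (phaseCoords n).contDiff, fun k => ?_⟩
  obtain ⟨C, hC, hle⟩ := exists_norm_iteratedFDeriv_phaseBasis_le hσ k
  refine ⟨C * n ^ k, by positivity, fun X Y => ?_⟩
  have hcomp := iteratedFDeriv_comp_affine_apply (phaseCoords n).toContinuousLinearMap 0 hsmooth X Y
  simp only [zero_add] at hcomp
  calc _ = _ := congrArg norm hcomp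
    _ ≤ C * wt X.2.ofLp ^ (m / 2) * ∏ i, ∑ c,
        |(phaseBasis n).repr (phaseCoords n (Y i)) c| * coordWeight ρ δ X.2.ofLp c :=
        norm_multilinear_apply_le_of_basis _ _ (hle _) _
    _ ≤ C * (1 + ‖X.2‖ ^ 2) ^ (m / 2) * ∏ i, (n * phaseLength ρ δ X.2 (Y i)) := by
        rw [wt_ofLp]
        gcongr
        · exact fun i _ => Finset.sum_nonneg fun c _ =>
            mul_nonneg (abs_nonneg _) (coordWeight_nonneg _ _ _ _)
        · exact sum_abs_repr_mul_coordWeight_le _ _ _ _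
    _ = _ := by
        rw [Finset.prod_mul_distrib, Finset.prod_const, Finset.card_univ, Fintype.card_fin]
        ring

end Coordinates

section CoordinateTransforms

variable {n : ℕ}

lemma expi_eq_fourierChar (t : ℝ) : expi t = Real.fourierChar t := by
  rw [expi, Real.fourierChar_apply]
  push_cast
  ring_nf

lemma dotp_ofLp (v w : EuclideanSpace ℝ (Fin n)) : dotp v.ofLp w.ofLp = inner ℝ v w := by
  simp [dotp, PiLp.inner_apply, mul_comm]

lemma integral_eq_integral_ofLp {G : Type*} [NormedAddCommGroup G] [NormedSpace ℝ G]
    (h : (Fin n → ℝ) → G) : ∫ y, h y = ∫ v : EuclideanSpace ℝ (Fin n), h v.ofLp :=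
  ((EuclideanSpace.volume_preserving_symm_measurableEquiv_toLp (Fin n)).integral_comp
    (MeasurableEquiv.measurableEmbedding _) h).symm

/-- A Schwartz function on `Fin n → ℝ`, regarded as one on `EuclideanSpace ℝ (Fin n)`. -/
noncomputable def toEuclidean (f : 𝓢(Fin n → ℝ, ℂ)) : 𝓢(EuclideanSpace ℝ (Fin n), ℂ) :=
  compCLMOfContinuousLinearEquiv ℝ (EuclideanSpace.equiv (Fin n) ℝ) f

lemma toEuclidean_apply (f : 𝓢(Fin n → ℝ, ℂ)) (x : EuclideanSpace ℝ (Fin n)) :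
    toEuclidean f x = f x.ofLp :=
  rfl

lemma FT_ofLp (f : 𝓢(Fin n → ℝ, ℂ)) (w : EuclideanSpace ℝ (Fin n)) :
    FT f w.ofLp = (𝓕 (toEuclidean f) : 𝓢(EuclideanSpace ℝ (Fin n), ℂ)) w := by
  rw [fourier_coe, Real.fourier_eq, FT, integral_eq_integral_ofLp]
  refine integral_congr_ae (.of_forall fun v => ?_)
  simp only [dotp_ofLp, expi_eq_fourierChar, toEuclidean_apply, Circle.smul_def, smul_eq_mul]
  ring

lemma sobSq_eq_sobolevEnergy (s : ℝ) (f : 𝓢(Fin n → ℝ, ℂ)) :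
    sobSq s f = sobolevEnergy s ⇑(𝓕 (toEuclidean f) : 𝓢(EuclideanSpace ℝ (Fin n), ℂ)) := by
  rw [sobSq, integral_eq_integral_ofLp, sobolevEnergy]
  simp only [wt_ofLp, FT_ofLp]

lemma integral_OpKN_mul_conj_eq_knForm (σ : (Fin n → ℝ) → (Fin n → ℝ) → ℂ)
    (f : 𝓢(Fin n → ℝ, ℂ)) :
    ∫ x, OpKN σ f x * conj (f x) = knForm (fun X => σ X.1.ofLp X.2.ofLp)
      ⇑(𝓕 (toEuclidean f) : 𝓢(EuclideanSpace ℝ (Fin n), ℂ)) (toEuclidean f) := by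
  rw [integral_eq_integral_ofLp, knForm]
  refine integral_congr_ae (.of_forall fun x => ?_)
  simp only [toEuclidean_apply]
  congr 1
  rw [OpKN, integral_eq_integral_ofLp, Real.fourierInv_eq]
  refine integral_congr_ae (.of_forall fun ζ => ?_)
  simp only [dotp_ofLp, FT_ofLp, expi_eq_fourierChar, Circle.smul_def, smul_eq_mul,
    real_inner_comm x ζ, mul_assoc]

end CoordinateTransforms

end Garding

open Garding in
theorem garding_eta_general (n : ℕ) (m ρ δ : ℝ) (hρ0 : 0 < ρ) (hδ1 : δ < 1) (hδρ : δ < ρ)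
    (σ : (Fin n → ℝ) → (Fin n → ℝ) → ℝ)
    (hσ : SymbolClass m ρ δ (fun x ξ => ((σ x ξ : ℝ) : ℂ)))
    (hpos : ∀ x ξ, 0 ≤ σ x ξ) (s s' : ℝ) (hs : m / 2 ≤ s) :
    ∀ η > (0 : ℝ), ∃ C > 0, ∀ f : SchwartzMap (Fin n → ℝ) ℂ,
      -η * sobSq s (⇑f) - C * sobSq s' (⇑f)
        ≤ (∫ x, OpKN (fun x ξ => ((σ x ξ : ℝ) : ℂ)) (⇑f) x
            * (starRingEnd ℂ) (f x)).re := by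
  intro η hη
  obtain ⟨C, hC, hgarding⟩ := (isHormanderSymbol_of_symbolClass hσ).garding
    (fun X => hpos X.1.ofLp X.2.ofLp) hρ0 hδ1 hδρ hs hη s'
  refine ⟨C, hC, fun f => ?_⟩
  rw [sobSq_eq_sobolevEnergy, sobSq_eq_sobolevEnergy, integral_OpKN_mul_conj_eq_knForm]
  exact hgarding (toEuclidean f)

/-- `η`-version of the Gårding inequality for non-negative
symbols. -/
theorem garding_eta (n : ℕ) (hn : 1 ≤ n)
    (m ρ δ : ℝ) (hρ : ρ ≤ 1) (hδρ : δ < ρ) (hδ0 : 0 ≤ δ)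
    (σ : (Fin n → ℝ) → (Fin n → ℝ) → ℝ)
    (hσ : SymbolClass m ρ δ (fun x ξ => ((σ x ξ : ℝ) : ℂ)))
    (hpos : ∀ x ξ, 0 ≤ σ x ξ) :
    ∀ η > (0 : ℝ), ∃ C > 0, ∀ f : SchwartzMap (Fin n → ℝ) ℂ,
      -η * sobSq ((m + δ) / 2) (⇑f) - C * sobSq ((m - (ρ - δ)) / 2) (⇑f)
        ≤ (∫ x, OpKN (fun x ξ => ((σ x ξ : ℝ) : ℂ)) (⇑f) x
            * (starRingEnd ℂ) (f x)).re :=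
  garding_eta_general n m ρ δ (hδ0.trans_lt hδρ) (hδρ.trans_le hρ) hδρ σ hσ hpos _ _ (by linarith)
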